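/- arXiv:0901.3599 — 4 statements merged into one kernel-verified Lean document; each statement's English description precedes it below -/
import Mathlib

section
/- Every integral lattice L in ℝ^16 with BW16 ⊆ L is isometric (via a linear isometry of ℝ^16) to one of the following ten lattices: BW16, O16, Λ_{16,2,1}, Λ_{16,2,2}, Λ_{16,2,3}, Λ'_{16,2,1}, Λ'_{16,2,2}, Λ'_{16,2,3}, D16^+, and E8 ⊥ E8. -/
noncomputable section

open scoped RealInnerProductSpace

/-- `ℝ^n` with the standard inner product. -/
abbrev E (n : ℕ) := EuclideanSpace ℝ (Fin n)

/-- The standard basis vector `ε i`. -/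
def εv {n : ℕ} (i : Fin n) : E n := EuclideanSpace.single i 1

/-- The vector of `ℝ^n` with the given coordinates. -/
def vec {n : ℕ} (x : Fin n → ℝ) : E n := (WithLp.equiv 2 (Fin n → ℝ)).symm x

/-- The vector of `ℝ^n` with the given integer coordinates. -/
def intVec {n : ℕ} (x : Fin n → ℤ) : E n := (WithLp.equiv 2 (Fin n → ℝ)).symm fun i => (x i : ℝ)

/-- A lattice is integral if all pairwise inner products of its elements are integers. -/
def LatticeIsIntegral {n : ℕ} (L : Submodule ℤ (E n)) : Prop :=
  ∀ x ∈ L, ∀ y ∈ L, ∃ k : ℤ, ⟪x, y⟫ = (k : ℝ)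

/-- Two lattices are isometric if a linear isometry of the ambient space carries
one onto the other. -/
def IsometricLattices {n : ℕ} (L M : Submodule ℤ (E n)) : Prop :=
  ∃ g : E n ≃ₗᵢ[ℝ] E n, g '' (L : Set (E n)) = (M : Set (E n))

def f0 : E 16 :=
  vec ![-1/2, 1/2, 1/2, 1/2, 1/2, 1/2, 1/2, 1/2, -1/2, 1/2, 1/2, 1/2, 1/2, 1/2, 1/2, 1/2]

def g1 : E 16 := εv 0 + εv 4 + εv 8 + εv 12
def g2 : E 16 := εv 0 + εv 2 + εv 4 + εv 6
def g3 : E 16 := εv 0 + εv 2 + εv 8 + εv 10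
def g4 : E 16 := εv 0 + εv 2 + εv 12 + εv 14
def g5 : E 16 := εv 0 + εv 1 + εv 2 + εv 3
def g6 : E 16 := εv 0 + εv 1 + εv 4 + εv 5
def g7 : E 16 := εv 0 + εv 1 + εv 6 + εv 7
def g8 : E 16 := εv 0 + εv 1 + εv 8 + εv 9
def g9 : E 16 := εv 0 + εv 1 + εv 10 + εv 11
def g10 : E 16 := εv 0 + εv 1 + εv 12 + εv 13
def g11 : E 16 := εv 0 + εv 1 + εv 14 + εv 15

/-- The Barnes-Wall lattice `BW₁₆ = ⟨2ε1, …, 2ε16, f0, g1, …, g11⟩`. -/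
def BW16 : Submodule ℤ (E 16) :=
  Submodule.span ℤ ((Set.range fun i : Fin 16 => (2 : ℝ) • εv i) ∪
    {f0, g1, g2, g3, g4, g5, g6, g7, g8, g9, g10, g11})

def f1 : E 16 := vec ![1/2, 1/2, 1/2, 1/2, 1/2, 1/2, 1/2, 1/2, 1, 0, 0, 0, 0, 0, 0, 0]

/-- `O₁₆ = ⟨BW₁₆, f1⟩`. -/
def O16 : Submodule ℤ (E 16) := BW16 ⊔ Submodule.span ℤ {f1}

/-- The root system `(A₁)¹⁶ = {±(ε_{2i-1} ± ε_{2i})}`. -/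
def setA1 : Set (E 16) :=
  {v | ∃ i : Fin 8, v = εv ⟨2 * i.1, by have := i.2; omega⟩ + εv ⟨2 * i.1 + 1, by have := i.2; omega⟩ ∨
       v = εv ⟨2 * i.1, by have := i.2; omega⟩ - εv ⟨2 * i.1 + 1, by have := i.2; omega⟩}

/-- The root system `(D₄)⁴ = {ε_i ± ε_j : i < j in the same block of 4}`. -/
def setD4 : Set (E 16) :=
  {v | ∃ i j : Fin 16, i.1 < j.1 ∧ i.1 / 4 = j.1 / 4 ∧ (v = εv i + εv j ∨ v = εv i - εv j)}

/-- The root system `D₈ ⊥ D₈ = {ε_i ± ε_j : i < j in the same block of 8}`. -/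
def setD8 : Set (E 16) :=
  {v | ∃ i j : Fin 16, i.1 < j.1 ∧ i.1 / 8 = j.1 / 8 ∧ (v = εv i + εv j ∨ v = εv i - εv j)}

def Λ16_2_1 : Submodule ℤ (E 16) := Submodule.span ℤ (setA1 ∪ {f0, f1, g1, g2, g3, g4})
def Λ16_2_2 : Submodule ℤ (E 16) := Submodule.span ℤ (setD4 ∪ {f0, f1, g1})
def Λ16_2_3 : Submodule ℤ (E 16) := Submodule.span ℤ (setD8 ∪ {f0, f1})
def Λ'16_2_1 : Submodule ℤ (E 16) := Submodule.span ℤ (setA1 ∪ {f0, g1, g2, g3, g4})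
def Λ'16_2_2 : Submodule ℤ (E 16) := Submodule.span ℤ (setD4 ∪ {f0, g1})
def Λ'16_2_3 : Submodule ℤ (E 16) := Submodule.span ℤ (setD8 ∪ {f0})

/-- `(ε1 + ⋯ + ε8)/2`. -/
def h1 : E 16 := vec fun i => if i.1 < 8 then 1/2 else 0
/-- `(ε9 + ⋯ + ε16)/2`. -/
def h2 : E 16 := vec fun i => if 8 ≤ i.1 then 1/2 else 0

/-- `D₁₆⁺ = ⟨D₈ ⊥ D₈, ε1 + ε9, f0⟩`. -/
def D16plus : Submodule ℤ (E 16) := Submodule.span ℤ (setD8 ∪ {εv 0 + εv 8, f0})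

/-- `E₈ ⊥ E₈ = ⟨D₈ ⊥ D₈, (ε1+⋯+ε8)/2, (ε9+⋯+ε16)/2⟩`. -/
def E8E8 : Submodule ℤ (E 16) := Submodule.span ℤ (setD8 ∪ {h1, h2})


/-! ## Integer models -/

def zl (l : List ℤ) : ℕ → ℤ := fun i => l.getD i 0

def dotN (z w : ℕ → ℤ) : ℕ → ℤ
  | 0 => 0
  | n + 1 => dotN z w n + z n * w n

def dot (z w : ℕ → ℤ) : ℤ := dotN z w 16

/-- half-integral vectors -/
def HH : (ℕ → ℤ) →+ E 16 where
  toFun z := vec fun i => (z i.1 : ℝ) / 2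
  map_zero' := by ext i; simp [vec]
  map_add' a b := by ext i; simp [vec]; ring

/-- quarter-integral vectors -/
def QQ : (ℕ → ℤ) →+ E 16 where
  toFun z := vec fun i => (z i.1 : ℝ) / 4
  map_zero' := by ext i; simp [vec]
  map_add' a b := by ext i; simp [vec]; ring

lemma HH_apply (z : ℕ → ℤ) (i : Fin 16) : HH z i = (z i.1 : ℝ) / 2 := by simp [HH, vec]
lemma QQ_apply (z : ℕ → ℤ) (i : Fin 16) : QQ z i = (z i.1 : ℝ) / 4 := by simp [QQ, vec]

lemma HH_eq_QQ (z : ℕ → ℤ) : HH z = QQ (2 • z) := by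
  ext i; rw [HH_apply, QQ_apply]; simp; ring

lemma dot_eq (z w : ℕ → ℤ) : dot z w = ∑ i : Fin 16, z i.1 * w i.1 := by
  have h : ∀ n, dotN z w n = ∑ i ∈ Finset.range n, z i * w i := by
    intro n
    induction n with
    | zero => simp [dotN]
    | succ n ih => rw [dotN, ih, Finset.sum_range_succ]
  rw [dot, h, Finset.sum_range]

lemma inner_E (x y : E 16) : ⟪x, y⟫ = ∑ i, x i * y i := by
  rw [PiLp.inner_apply]
  refine Finset.sum_congr rfl fun i _ => ?_
  simp [mul_comm]

lemma inner_QH (z w : ℕ → ℤ) : ⟪QQ z, HH w⟫ = (dot z w : ℝ) / 8 := by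
  rw [inner_E, dot_eq]; push_cast
  rw [Finset.sum_div]
  refine Finset.sum_congr rfl fun i _ => ?_
  rw [QQ_apply, HH_apply]; ring

lemma inner_HH (z w : ℕ → ℤ) : ⟪HH z, HH w⟫ = (dot z w : ℝ) / 4 := by
  rw [inner_E, dot_eq]; push_cast
  rw [Finset.sum_div]
  refine Finset.sum_congr rfl fun i _ => ?_
  rw [HH_apply, HH_apply]; ring

/-- A basis of `BW16` chosen among its generators (doubled coordinates). -/
def basB : List (List ℤ) :=
  [[-1, 1, 1, 1, 1, 1, 1, 1, -1, 1, 1, 1, 1, 1, 1, 1],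
   [2, 0, 0, 0, 2, 0, 0, 0, 2, 0, 0, 0, 2, 0, 0, 0],
   [2, 0, 2, 0, 2, 0, 2, 0, 0, 0, 0, 0, 0, 0, 0, 0],
   [2, 0, 2, 0, 0, 0, 0, 0, 2, 0, 2, 0, 0, 0, 0, 0],
   [2, 0, 2, 0, 0, 0, 0, 0, 0, 0, 0, 0, 2, 0, 2, 0],
   [2, 2, 2, 2, 0, 0, 0, 0, 0, 0, 0, 0, 0, 0, 0, 0],
   [2, 2, 0, 0, 2, 2, 0, 0, 0, 0, 0, 0, 0, 0, 0, 0],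
   [2, 2, 0, 0, 0, 0, 2, 2, 0, 0, 0, 0, 0, 0, 0, 0],
   [2, 2, 0, 0, 0, 0, 0, 0, 2, 2, 0, 0, 0, 0, 0, 0],
   [2, 2, 0, 0, 0, 0, 0, 0, 0, 0, 2, 2, 0, 0, 0, 0],
   [2, 2, 0, 0, 0, 0, 0, 0, 0, 0, 0, 0, 2, 2, 0, 0],
   [2, 2, 0, 0, 0, 0, 0, 0, 0, 0, 0, 0, 0, 0, 2, 2],
   [4, 0, 0, 0, 0, 0, 0, 0, 0, 0, 0, 0, 0, 0, 0, 0],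
   [0, 4, 0, 0, 0, 0, 0, 0, 0, 0, 0, 0, 0, 0, 0, 0],
   [0, 0, 4, 0, 0, 0, 0, 0, 0, 0, 0, 0, 0, 0, 0, 0],
   [0, 0, 0, 0, 4, 0, 0, 0, 0, 0, 0, 0, 0, 0, 0, 0]]

/-- The dual basis (doubled coordinates). -/
def basD : List (List ℤ) :=
  [[0, 0, 0, 0, 0, 0, 0, 0, -2, 2, 2, -2, 2, -2, -2, 2],
   [0, 0, 0, 0, 0, 0, 0, 0, 0, 0, 0, 0, 2, -2, -2, 2],
   [0, 0, 0, 0, 0, 0, 2, -2, 0, 0, 0, 0, 0, 0, 0, 0],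
   [0, 0, 0, 0, 0, 0, 0, 0, 0, 0, 2, -2, 0, 0, 0, 0],
   [0, 0, 0, 0, 0, 0, 0, 0, 0, 0, 0, 0, 0, 0, 2, -2],
   [0, 0, 0, 2, 0, 0, 0, 0, 1, -1, -1, 1, -1, 1, 1, -1],
   [0, 0, 0, 0, 0, 2, 0, 0, 1, -1, -1, 1, -1, 1, 1, -1],
   [0, 0, 0, 0, 0, 0, 0, 2, 1, -1, -1, 1, -1, 1, 1, -1],
   [0, 0, 0, 0, 0, 0, 0, 0, 1, 1, -1, 1, -1, 1, 1, -1],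
   [0, 0, 0, 0, 0, 0, 0, 0, 1, -1, -1, 3, -1, 1, 1, -1],
   [0, 0, 0, 0, 0, 0, 0, 0, 1, -1, -1, 1, -1, 3, 1, -1],
   [0, 0, 0, 0, 0, 0, 0, 0, 1, -1, -1, 1, -1, 1, 1, 1],
   [1, 0, 0, -1, 0, -1, -1, 0, -4, 3, 3, -4, 3, -4, -4, 3],
   [0, 1, 0, -1, 0, -1, 0, -1, -3, 2, 3, -4, 3, -4, -3, 2],
   [0, 0, 1, -1, 0, 0, -1, 1, 0, 0, -1, 1, 0, 0, -1, 1],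
   [0, 0, 0, 0, 1, -1, -1, 1, 0, 0, 0, 0, -1, 1, 1, -1]]

/-- Representatives of a basis of the discriminant group (doubled coordinates). -/
def basU : List (List ℤ) :=
  [[2, 2, 0, 0, 0, 0, 0, 0, 0, 0, 0, 0, 0, 0, 0, 0],
   [2, 0, 2, 0, 0, 0, 0, 0, 0, 0, 0, 0, 0, 0, 0, 0],
   [2, 0, 0, 0, 2, 0, 0, 0, 0, 0, 0, 0, 0, 0, 0, 0],
   [2, 0, 0, 0, 0, 0, 0, 0, 2, 0, 0, 0, 0, 0, 0, 0],
   [1, 0, 1, 0, 1, 0, 1, 0, 1, 0, 1, 0, 1, 0, 1, 0],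
   [1, 1, 0, 0, 1, 1, 0, 0, 1, 1, 0, 0, 1, 1, 0, 0],
   [1, 1, 1, 1, 0, 0, 0, 0, 1, 1, 1, 1, 0, 0, 0, 0],
   [-1, 1, 1, 1, 1, 1, 1, 1, 0, 0, 0, 0, 0, 0, 0, 0]]

def bB (j : ℕ) : ℕ → ℤ := zl (basB.getD j [])
def bD (j : ℕ) : ℕ → ℤ := zl (basD.getD j [])

def inBW (z : ℕ → ℤ) : Bool := (List.range 16).all fun j => dot z (bD j) % 8 == 0

lemma bas_dual : ∀ a < 16, ∀ b < 16,
    dot (fun j => bB j a) (fun j => bD j b) = if a = b then 4 else 0 := by decide +kernel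

lemma single_two (i : Fin 16) : HH (fun k => if k = i.1 then 4 else 0) = (2 : ℝ) • εv i := by
  ext k
  rw [HH_apply]
  simp [εv, Fin.ext_iff]
  split_ifs <;> norm_num

lemma eps_HH (i : Fin 16) : εv i = HH (fun k => if k = i.1 then 2 else 0) := by
  ext k
  rw [HH_apply]
  simp [εv, Fin.ext_iff]
  split_ifs <;> norm_num

lemma expand (x : E 16) : x = ∑ j : Fin 16, ⟪x, HH (bB j)⟫ • HH (bD j) := by
  ext b
  have key : ∀ a : Fin 16, ∑ j : Fin 16, (HH (bB j) a) * (HH (bD j) b) = if a = b then 1 else 0 := by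
    intro a
    have := bas_dual a.1 a.2 b.1 b.2
    rw [dot_eq] at this
    have h2 : ((∑ j : Fin 16, bB j.1 a.1 * bD j.1 b.1 : ℤ) : ℝ) = if a = b then 4 else 0 := by
      rw [this]; simp [Fin.ext_iff]
    push_cast at h2
    calc ∑ j : Fin 16, (HH (bB j) a) * (HH (bD j) b)
        = (∑ j : Fin 16, (bB j.1 a.1 : ℝ) * bD j.1 b.1) / 4 := by
          rw [Finset.sum_div]
          refine Finset.sum_congr rfl fun i _ => ?_
          rw [HH_apply, HH_apply]; ring
      _ = _ := by rw [h2]; split_ifs <;> norm_num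
  have : (∑ j : Fin 16, ⟪x, HH (bB j)⟫ • HH (bD j)) b
      = ∑ j : Fin 16, (∑ a, x a * HH (bB j) a) * HH (bD j) b := by
    simp [inner_E]
  rw [this]
  simp_rw [Finset.sum_mul]
  rw [Finset.sum_comm]
  simp_rw [mul_assoc, ← Finset.mul_sum, key]
  simp

lemma expand' (x : E 16) : x = ∑ j : Fin 16, ⟪x, HH (bD j)⟫ • HH (bB j) := by
  ext b
  have key : ∀ a : Fin 16, ∑ j : Fin 16, (HH (bD j) a) * (HH (bB j) b) = if a = b then 1 else 0 := by
    intro a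
    have := bas_dual b.1 b.2 a.1 a.2
    rw [dot_eq] at this
    have h2 : ((∑ j : Fin 16, bB j.1 b.1 * bD j.1 a.1 : ℤ) : ℝ) = if a = b then 4 else 0 := by
      rw [this]; simp [Fin.ext_iff, eq_comm]
    push_cast at h2
    calc ∑ j : Fin 16, (HH (bD j) a) * (HH (bB j) b)
        = (∑ j : Fin 16, (bB j.1 b.1 : ℝ) * bD j.1 a.1) / 4 := by
          rw [Finset.sum_div]
          refine Finset.sum_congr rfl fun i _ => ?_
          rw [HH_apply, HH_apply]; ring
      _ = _ := by rw [h2]; split_ifs <;> norm_num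
  have : (∑ j : Fin 16, ⟪x, HH (bD j)⟫ • HH (bB j)) b
      = ∑ j : Fin 16, (∑ a, x a * HH (bD j) a) * HH (bB j) b := by
    simp [inner_E]
  rw [this]
  simp_rw [Finset.sum_mul]
  rw [Finset.sum_comm]
  simp_rw [mul_assoc, ← Finset.mul_sum, key]
  simp

/-! ## Generators of BW16 in the integer model -/

lemma f0_HH : f0 = HH (bB 0) := by
  ext k
  rw [HH_apply]
  fin_cases k <;> simp [f0, vec, bB, basB, zl]

lemma f1_HH : f1 = HH (zl [1, 1, 1, 1, 1, 1, 1, 1, 2, 0, 0, 0, 0, 0, 0, 0]) := by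
  ext k
  rw [HH_apply]
  fin_cases k <;> simp [f1, vec, zl]

lemma g1_HH : g1 = HH (bB 1) := by
  ext k
  rw [HH_apply]
  fin_cases k <;> simp [g1, εv, bB, basB, zl]

lemma g2_HH : g2 = HH (bB 2) := by
  ext k
  rw [HH_apply]
  fin_cases k <;> simp [g2, εv, bB, basB, zl]

lemma g3_HH : g3 = HH (bB 3) := by
  ext k
  rw [HH_apply]
  fin_cases k <;> simp [g3, εv, bB, basB, zl]

lemma g4_HH : g4 = HH (bB 4) := by
  ext k
  rw [HH_apply]
  fin_cases k <;> simp [g4, εv, bB, basB, zl]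

lemma g5_HH : g5 = HH (bB 5) := by
  ext k
  rw [HH_apply]
  fin_cases k <;> simp [g5, εv, bB, basB, zl]

lemma g6_HH : g6 = HH (bB 6) := by
  ext k
  rw [HH_apply]
  fin_cases k <;> simp [g6, εv, bB, basB, zl]

lemma g7_HH : g7 = HH (bB 7) := by
  ext k
  rw [HH_apply]
  fin_cases k <;> simp [g7, εv, bB, basB, zl]

lemma g8_HH : g8 = HH (bB 8) := by
  ext k
  rw [HH_apply]
  fin_cases k <;> simp [g8, εv, bB, basB, zl]

lemma g9_HH : g9 = HH (bB 9) := by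
  ext k
  rw [HH_apply]
  fin_cases k <;> simp [g9, εv, bB, basB, zl]

lemma g10_HH : g10 = HH (bB 10) := by
  ext k
  rw [HH_apply]
  fin_cases k <;> simp [g10, εv, bB, basB, zl]

lemma g11_HH : g11 = HH (bB 11) := by
  ext k
  rw [HH_apply]
  fin_cases k <;> simp [g11, εv, bB, basB, zl]


lemma bB_mem : ∀ j : Fin 16, HH (bB j.1) ∈ BW16 := by
  have hg : ∀ x ∈ ({f0, g1, g2, g3, g4, g5, g6, g7, g8, g9, g10, g11} : Set (E 16)), x ∈ BW16 :=
    fun x hx => Submodule.subset_span (Or.inr hx)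
  have he : ∀ i : Fin 16, (2 : ℝ) • εv i ∈ BW16 :=
    fun i => Submodule.subset_span (Or.inl ⟨i, rfl⟩)
  have h12 : HH (bB 12) ∈ BW16 := by
    convert he 0 using 1; rw [← single_two]; ext k; rw [HH_apply, HH_apply]
    fin_cases k <;> simp [bB, basB, zl]
  have h13 : HH (bB 13) ∈ BW16 := by
    convert he 1 using 1; rw [← single_two]; ext k; rw [HH_apply, HH_apply]
    fin_cases k <;> simp [bB, basB, zl]
  have h14 : HH (bB 14) ∈ BW16 := by
    convert he 2 using 1; rw [← single_two]; ext k; rw [HH_apply, HH_apply]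
    fin_cases k <;> simp [bB, basB, zl]
  have h15 : HH (bB 15) ∈ BW16 := by
    convert he 4 using 1; rw [← single_two]; ext k; rw [HH_apply, HH_apply]
    fin_cases k <;> simp [bB, basB, zl]
  intro j
  fin_cases j
  · exact f0_HH ▸ hg f0 (by simp)
  · exact g1_HH ▸ hg g1 (by simp)
  · exact g2_HH ▸ hg g2 (by simp)
  · exact g3_HH ▸ hg g3 (by simp)
  · exact g4_HH ▸ hg g4 (by simp)
  · exact g5_HH ▸ hg g5 (by simp)
  · exact g6_HH ▸ hg g6 (by simp)
  · exact g7_HH ▸ hg g7 (by simp)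
  · exact g8_HH ▸ hg g8 (by simp)
  · exact g9_HH ▸ hg g9 (by simp)
  · exact g10_HH ▸ hg g10 (by simp)
  · exact g11_HH ▸ hg g11 (by simp)
  · exact h12
  · exact h13
  · exact h14
  · exact h15

lemma QQ_mem {z : ℕ → ℤ} (h : inBW z = true) : QQ z ∈ BW16 := by
  rw [expand' (QQ z)]
  refine Submodule.sum_mem _ fun j _ => ?_
  have h1 : dot z (bD j.1) % 8 = 0 := by
    have := List.all_eq_true.1 h j.1 (List.mem_range.2 j.2)
    simpa using this
  obtain ⟨k, hk⟩ := Int.dvd_of_emod_eq_zero h1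
  have : ⟪QQ z, HH (bD j.1)⟫ = (k : ℝ) := by
    rw [inner_QH, hk]; push_cast; ring
  rw [this, Int.cast_smul_eq_zsmul]
  exact Submodule.smul_mem _ _ (bB_mem j)

lemma HH_mem {z : ℕ → ℤ} (h : inBW (2 • z) = true) : HH z ∈ BW16 := by
  rw [HH_eq_QQ]; exact QQ_mem h

lemma BW_le {P : Submodule ℤ (E 16)} (h : ∀ j : Fin 16, HH (bB j.1) ∈ P) : BW16 ≤ P := by
  have hint : (List.range 16).all (fun i => (List.range 16).all fun j => dot
      (fun k => if k = i then 8 else 0) (bD j) % 8 == 0) = true := by decide +kernel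
  rw [BW16, Submodule.span_le]
  rintro x (⟨i, rfl⟩ | hx)
  · have h0 := List.all_eq_true.1 hint i.1 (List.mem_range.2 i.2)
    show (2 : ℝ) • εv i ∈ P
    rw [expand' ((2 : ℝ) • εv i)]
    refine Submodule.sum_mem _ fun j _ => ?_
    have h1 := List.all_eq_true.1 h0 j.1 (List.mem_range.2 j.2)
    simp only [beq_iff_eq] at h1
    obtain ⟨k, hk⟩ := Int.dvd_of_emod_eq_zero h1
    have : ⟪(2 : ℝ) • εv i, HH (bD j.1)⟫ = (k : ℝ) := by
      have e : (2 : ℝ) • εv i = QQ (fun k => if k = i.1 then 8 else 0) := by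
        rw [← single_two, HH_eq_QQ]; congr 1; ext k; simp
      rw [e, inner_QH, hk]; push_cast; ring
    rw [this, Int.cast_smul_eq_zsmul]
    exact Submodule.smul_mem _ _ (h j)
  · simp only [Set.mem_insert_iff, Set.mem_singleton_iff] at hx
    rcases hx with rfl | rfl | rfl | rfl | rfl | rfl | rfl | rfl | rfl | rfl | rfl | rfl
    · exact f0_HH ▸ h 0
    · exact g1_HH ▸ h 1
    · exact g2_HH ▸ h 2
    · exact g3_HH ▸ h 3
    · exact g4_HH ▸ h 4
    · exact g5_HH ▸ h 5
    · exact g6_HH ▸ h 6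
    · exact g7_HH ▸ h 7
    · exact g8_HH ▸ h 8
    · exact g9_HH ▸ h 9
    · exact g10_HH ▸ h 10
    · exact g11_HH ▸ h 11

/-! ## Codes of lattices between `BW16` and its dual -/

/-- The combination of the vectors `us` given by the binary digits of `c`. -/
def comb {A : Type*} [AddCommGroup A] : List A → ℕ → A
  | [], _ => 0
  | u :: us, c => (if c % 2 = 1 then u else 0) + comb us (c / 2)

/-- `𝔽₂`-linear action on binary codes. -/
def act : List ℕ → ℕ → ℕ
  | [], _ => 0
  | m :: M, c => (if c % 2 = 1 then m else 0) ^^^ act M (c / 2)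

lemma map_comb {A B : Type*} [AddCommGroup A] [AddCommGroup B] (f : A →+ B) (us : List A) (c : ℕ) :
    f (comb us c) = comb (us.map f) c := by
  induction us generalizing c with
  | nil => simp [comb]
  | cons u us ih => simp only [comb, List.map_cons, map_add, ih]; split_ifs <;> simp

lemma comb_zero {A : Type*} [AddCommGroup A] (us : List A) : comb us 0 = 0 := by
  induction us with
  | nil => rfl
  | cons u us ih => simp [comb, ih]

lemma comb_xor {A : Type*} [AddCommGroup A] (P : Submodule ℤ A) (us : List A)
    (h : ∀ u ∈ us, u + u ∈ P) (a b : ℕ) :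
    comb us (a ^^^ b) - (comb us a + comb us b) ∈ P := by
  induction us generalizing a b with
  | nil => simp [comb]
  | cons u us ih =>
    have h1 := ih (fun v hv => h v (List.mem_cons_of_mem _ hv)) (a / 2) (b / 2)
    have h2 : (a ^^^ b) / 2 = a / 2 ^^^ b / 2 := Nat.xor_div_two
    have h3 : (a ^^^ b) % 2 = (a + b) % 2 := Nat.xor_mod_two_eq
    have hu := h u List.mem_cons_self
    simp only [comb, h2, h3]
    rcases Nat.mod_two_eq_zero_or_one a with ha | ha <;>
      rcases Nat.mod_two_eq_zero_or_one b with hb | hb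
    · rw [if_neg (by omega), if_neg (by omega), if_neg (by omega)]
      convert h1 using 1; abel
    · rw [if_pos (by omega), if_neg (by omega), if_pos (by omega)]
      convert h1 using 1; abel
    · rw [if_pos (by omega), if_pos (by omega), if_neg (by omega)]
      convert h1 using 1; abel
    · rw [if_neg (by omega), if_pos (by omega), if_pos (by omega)]
      convert P.sub_mem h1 hu using 1; abel

/-- Integer model of the coset representative with code `c`. -/
def DD (c : ℕ) : ℕ → ℤ := comb (basU.map zl) c

/-- The coset representative with code `c`. -/
def dd (c : ℕ) : E 16 := HH (DD c)

lemma dd_eq (c : ℕ) : dd c = comb ((basU.map zl).map HH) c := map_comb HH _ _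

lemma basU_two : ∀ u ∈ (basU.map zl).map HH, u + u ∈ BW16 := by
  have h : ((basU.map zl).all fun z => inBW (2 • (z + z))) = true := by decide +kernel
  intro u hu
  obtain ⟨z, hz, rfl⟩ := List.mem_map.1 hu
  rw [← map_add]
  exact HH_mem (List.all_eq_true.1 h z hz)

lemma dd_xor (a b : ℕ) : dd (a ^^^ b) - (dd a + dd b) ∈ BW16 := by
  simp only [dd_eq]
  exact comb_xor BW16 _ basU_two a b

lemma dd_zero : dd 0 = 0 := by rw [dd_eq, comb_zero]

def Good (L : Submodule ℤ (E 16)) : Prop := LatticeIsIntegral L ∧ BW16 ≤ L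

lemma code_xor {L : Submodule ℤ (E 16)} (hL : BW16 ≤ L) {a b : ℕ} (ha : dd a ∈ L) (hb : dd b ∈ L) :
    dd (a ^^^ b) ∈ L := by
  have := L.add_mem (hL (dd_xor a b)) (L.add_mem ha hb)
  simpa using this

lemma code_congr {L : Submodule ℤ (E 16)} (hL : BW16 ≤ L) {x y : E 16} (h : x - y ∈ BW16) :
    x ∈ L ↔ y ∈ L := by
  have h' := hL h
  constructor
  · intro hx; simpa using L.sub_mem hx h'
  · intro hy; simpa using L.add_mem h' hy

def dualCodes : List ℕ := [0, 0, 1, 1, 1, 139, 141, 143, 129, 131, 133, 135, 248, 145, 41, 72]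

/-- The dual lattice of `BW16`, as a union of cosets. -/
def dualBW : Submodule ℤ (E 16) :=
  AddSubgroup.toIntSubmodule
  { carrier := {x | ∃ c < 256, x - dd c ∈ BW16}
    zero_mem' := ⟨0, by norm_num, by simp [dd_zero]⟩
    add_mem' := by
      rintro x y ⟨a, ha, hxa⟩ ⟨b, hb, hyb⟩
      refine ⟨a ^^^ b, Nat.xor_lt_two_pow (n := 8) ha hb, ?_⟩
      have := BW16.sub_mem (BW16.add_mem hxa hyb) (dd_xor a b)
      convert this using 1; abel
    neg_mem' := by
      rintro x ⟨a, ha, hxa⟩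
      refine ⟨a, ha, ?_⟩
      have h1 := dd_xor a a
      rw [Nat.xor_self, dd_zero] at h1
      have := BW16.sub_mem h1 hxa
      convert this using 1; abel }

lemma mem_dualBW {x : E 16} : x ∈ dualBW ↔ ∃ c < 256, x - dd c ∈ BW16 := Iff.rfl

lemma bD_mem (j : Fin 16) : HH (bD j.1) ∈ dualBW := by
  have h : ((List.range 16).all fun j => inBW (2 • (bD j - DD (dualCodes.getD j 0)))) = true := by
    decide +kernel
  have hc : ∀ j < 16, dualCodes.getD j 0 < 256 := by decide
  refine mem_dualBW.2 ⟨dualCodes.getD j.1 0, hc _ j.2, ?_⟩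
  rw [dd, ← map_sub]
  exact HH_mem (List.all_eq_true.1 h j.1 (List.mem_range.2 j.2))

lemma cover {L : Submodule ℤ (E 16)} (hL : Good L) {x : E 16} (hx : x ∈ L) :
    ∃ c < 256, dd c ∈ L ∧ x - dd c ∈ BW16 := by
  have : x ∈ dualBW := by
    rw [expand x]
    refine Submodule.sum_mem _ fun j _ => ?_
    obtain ⟨k, hk⟩ := hL.1 x hx _ (hL.2 (bB_mem j))
    rw [hk, Int.cast_smul_eq_zsmul]
    exact Submodule.smul_mem _ _ (bD_mem j)
  obtain ⟨c, hc, h⟩ := mem_dualBW.1 this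
  exact ⟨c, hc, (code_congr hL.2 h).1 hx, h⟩

def orth (a b : ℕ) : Bool := dot (DD a) (DD b) % 4 == 0

def isEven (a : ℕ) : Bool := dot (DD a) (DD a) % 8 == 0

lemma orth_of_mem {L : Submodule ℤ (E 16)} (hL : Good L) {a b : ℕ} (ha : dd a ∈ L) (hb : dd b ∈ L) :
    orth a b = true := by
  obtain ⟨k, hk⟩ := hL.1 _ ha _ hb
  rw [dd, dd, inner_HH] at hk
  have : dot (DD a) (DD b) = 4 * k := by
    have h : (dot (DD a) (DD b) : ℝ) = 4 * k := by linarith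
    exact_mod_cast h
  simp [orth, this]

/-! ## Isometries from integer matrices -/

/-- A certified isometry: `N / 2` is an orthogonal symmetric matrix. -/
structure Gen where
  N : ℕ → ℕ → ℤ
  M : List ℕ

def Gen.orthOK (g : Gen) : Bool :=
  (List.range 16).all fun i => (List.range 16).all fun j =>
    (g.N i j == g.N j i) && (dot (g.N i) (g.N j) == if i = j then 4 else 0)

def mulv (N : ℕ → ℕ → ℤ) (z : ℕ → ℤ) : ℕ → ℤ := fun i => dot (N i) z

def Gen.bwOK (g : Gen) : Bool :=
  ((List.range 16).all fun j => inBW (mulv g.N (bB j))) &&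
  ((List.range 8).all fun j => inBW (mulv g.N (zl (basU.getD j [])) - 2 • DD (g.M.getD j 0))) &&
  g.M.length == 8

def Gen.lin (g : Gen) : E 16 →ₗ[ℝ] E 16 where
  toFun x := vec fun i => ∑ j : Fin 16, ((g.N i.1 j.1 : ℝ) / 2) * x j
  map_add' x y := by
    ext i; simp [vec, mul_add, Finset.sum_add_distrib]
  map_smul' r x := by
    ext i; simp [vec, Finset.mul_sum]
    refine Finset.sum_congr rfl fun j _ => ?_
    ring

lemma Gen.lin_apply (g : Gen) (x : E 16) (i : Fin 16) :
    g.lin x i = ∑ j : Fin 16, ((g.N i.1 j.1 : ℝ) / 2) * x j := by simp [Gen.lin, vec]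

lemma Gen.lin_HH (g : Gen) (z : ℕ → ℤ) : g.lin (HH z) = QQ (mulv g.N z) := by
  ext i
  rw [Gen.lin_apply, QQ_apply, mulv, dot_eq]
  push_cast
  rw [Finset.sum_div]
  refine Finset.sum_congr rfl fun j _ => ?_
  rw [HH_apply]; ring

lemma Gen.lin_lin (g : Gen) (h : g.orthOK = true) (x : E 16) : g.lin (g.lin x) = x := by
  have h' : ∀ i j : Fin 16, g.N i.1 j.1 = g.N j.1 i.1 ∧
      dot (g.N i.1) (g.N j.1) = if i = j then 4 else 0 := by
    intro i j
    have := List.all_eq_true.1 (List.all_eq_true.1 h i.1 (List.mem_range.2 i.2)) j.1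
      (List.mem_range.2 j.2)
    simpa [Fin.ext_iff] using this
  ext i
  rw [Gen.lin_apply]
  simp_rw [Gen.lin_apply, Finset.mul_sum]
  rw [Finset.sum_comm]
  have key : ∀ k : Fin 16, ∑ j : Fin 16, ((g.N i.1 j.1 : ℝ) / 2) * ((g.N j.1 k.1 : ℝ) / 2)
      = if i = k then 1 else 0 := by
    intro k
    have h1 := (h' i k).2
    rw [dot_eq] at h1
    have h2 : ((∑ j : Fin 16, g.N i.1 j.1 * g.N k.1 j.1 : ℤ) : ℝ) = if i = k then 4 else 0 := by
      rw [h1]; simp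
    push_cast at h2
    calc _ = (∑ j : Fin 16, (g.N i.1 j.1 : ℝ) * g.N k.1 j.1) / 4 := by
          rw [Finset.sum_div]
          refine Finset.sum_congr rfl fun j _ => ?_
          rw [(h' j k).1]; ring
      _ = _ := by rw [h2]; split_ifs <;> norm_num
  simp_rw [← mul_assoc, ← Finset.sum_mul, key]
  simp

lemma Gen.lin_adj (g : Gen) (h : g.orthOK = true) (x y : E 16) :
    ⟪g.lin x, y⟫ = ⟪x, g.lin y⟫ := by
  have h' : ∀ i j : Fin 16, g.N i.1 j.1 = g.N j.1 i.1 := by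
    intro i j
    have := List.all_eq_true.1 (List.all_eq_true.1 h i.1 (List.mem_range.2 i.2)) j.1
      (List.mem_range.2 j.2)
    simp at this
    exact this.1
  rw [inner_E, inner_E]
  simp_rw [Gen.lin_apply, Finset.sum_mul, Finset.mul_sum]
  rw [Finset.sum_comm]
  refine Finset.sum_congr rfl fun i _ => Finset.sum_congr rfl fun j _ => ?_
  rw [h' i j]; ring

/-- The isometry attached to a generator. -/
def Gen.iso (g : Gen) (h : g.orthOK = true) : E 16 ≃ₗᵢ[ℝ] E 16 :=
  LinearEquiv.isometryOfInner
    (LinearEquiv.ofLinearMap g.lin g.lin (LinearMap.ext fun x => g.lin_lin h x)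
      (LinearMap.ext fun x => g.lin_lin h x))
    (fun x y => by
      show ⟪g.lin x, g.lin y⟫ = _
      rw [g.lin_adj h, g.lin_lin h])

lemma Gen.iso_apply (g : Gen) (h : g.orthOK = true) (x : E 16) : g.iso h x = g.lin x := rfl

/-- The image lattice. -/
def Gen.img (g : Gen) (L : Submodule ℤ (E 16)) : Submodule ℤ (E 16) :=
  L.comap (g.lin.restrictScalars ℤ)

lemma Gen.mem_img (g : Gen) (L : Submodule ℤ (E 16)) (x : E 16) : x ∈ g.img L ↔ g.lin x ∈ L :=
  Iff.rfl

lemma Gen.isom_img (g : Gen) (h : g.orthOK = true) (L : Submodule ℤ (E 16)) :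
    IsometricLattices L (g.img L) := by
  refine ⟨g.iso h, ?_⟩
  ext x
  constructor
  · rintro ⟨y, hy, rfl⟩
    show g.lin (g.lin y) ∈ L
    rw [g.lin_lin h]; exact hy
  · intro hx
    exact ⟨g.lin x, hx, g.lin_lin h x⟩

lemma Gen.integral_img (g : Gen) (h : g.orthOK = true) {L : Submodule ℤ (E 16)}
    (hL : LatticeIsIntegral L) : LatticeIsIntegral (g.img L) := by
  intro x hx y hy
  obtain ⟨k, hk⟩ := hL _ hx _ hy
  refine ⟨k, ?_⟩
  have hk : ⟪g.lin x, g.lin y⟫ = (k : ℝ) := hk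
  rw [← hk, g.lin_adj h, g.lin_lin h]

def Gen.ok (g : Gen) : Bool := g.orthOK && g.bwOK

lemma Gen.ok_orth {g : Gen} (h : g.ok = true) : g.orthOK = true := by
  simp only [Gen.ok, Bool.and_eq_true] at h; exact h.1

lemma Gen.good_img {g : Gen} (h : g.ok = true) {L : Submodule ℤ (E 16)} (hL : Good L) :
    Good (g.img L) := by
  refine ⟨g.integral_img (Gen.ok_orth h) hL.1, BW_le fun j => ?_⟩
  rw [Gen.mem_img, Gen.lin_HH]
  simp only [Gen.ok, Gen.bwOK, Bool.and_eq_true] at h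
  exact hL.2 (QQ_mem (List.all_eq_true.1 h.2.1.1 j.1 (List.mem_range.2 j.2)))

lemma act_aux (g : Gen) (us : List (E 16)) (M : List ℕ)
    (h : List.Forall₂ (fun u m => g.lin u - dd m ∈ BW16) us M) (c : ℕ) :
    g.lin (comb us c) - dd (act M c) ∈ BW16 := by
  induction h generalizing c with
  | nil => simp [comb, act, dd_zero]
  | @cons u m us M hu _ ih =>
    simp only [comb, act, map_add]
    have h1 := ih (c / 2)
    have h2 := dd_xor (if c % 2 = 1 then m else 0) (act M (c / 2))
    have h3 : g.lin (if c % 2 = 1 then u else 0) - dd (if c % 2 = 1 then m else 0) ∈ BW16 := by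
      split_ifs
      · exact hu
      · simp [dd_zero]
    have := BW16.sub_mem (BW16.add_mem h1 h3) h2
    convert this using 1
    abel

lemma Gen.lin_dd {g : Gen} (h : g.ok = true) (c : ℕ) : g.lin (dd c) - dd (act g.M c) ∈ BW16 := by
  rw [dd_eq]
  refine act_aux g _ _ ?_ c
  simp only [Gen.ok, Gen.bwOK, Bool.and_eq_true] at h
  obtain ⟨-, ⟨-, h1⟩, h2⟩ := h
  have h2 : g.M.length = 8 := by simpa using h2
  rw [List.forall₂_iff_get]
  refine ⟨by simp [h2, basU], ?_⟩
  intro i hi hi'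
  have hi8 : i < 8 := h2 ▸ hi'
  have := List.all_eq_true.1 h1 i (List.mem_range.2 hi8)
  have h3 := QQ_mem this
  rw [map_sub, ← Gen.lin_HH, ← HH_eq_QQ] at h3
  have e1 : g.M.getD i 0 = g.M.get ⟨i, hi'⟩ := by simp [hi']
  have hb : i < basU.length := by simpa using hi
  have e2 : basU.getD i [] = basU.get ⟨i, hb⟩ := by simp [hb]
  rw [e1, e2] at h3
  simpa [dd] using h3

lemma Gen.code_img {g : Gen} (h : g.ok = true) {L : Submodule ℤ (E 16)} (hL : Good L) {c : ℕ} :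
    dd c ∈ g.img L ↔ dd (act g.M c) ∈ L := by
  rw [Gen.mem_img]; exact code_congr hL.2 (Gen.lin_dd h c)

lemma isom_trans {L M N : Submodule ℤ (E 16)} (h : IsometricLattices L M)
    (h' : IsometricLattices M N) : IsometricLattices L N := by
  obtain ⟨g, hg⟩ := h
  obtain ⟨g', hg'⟩ := h'
  refine ⟨g.trans g', ?_⟩
  rw [← hg', ← hg, Set.image_image]; rfl

lemma isom_refl (L : Submodule ℤ (E 16)) : IsometricLattices L L :=
  ⟨LinearIsometryEquiv.refl ℝ _, by simp⟩

/-! ## Generators and chains of moves -/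

def spanL : List ℕ → List ℕ
  | [] => [0]
  | v :: vs => spanL vs ++ (spanL vs).map (v ^^^ ·)

lemma spanL_mem {L : Submodule ℤ (E 16)} (hL : BW16 ≤ L) (B : List ℕ) (h : ∀ b ∈ B, dd b ∈ L) :
    ∀ w ∈ spanL B, dd w ∈ L := by
  induction B with
  | nil => intro w hw; simp only [spanL, List.mem_singleton] at hw; simp [hw, dd_zero]
  | cons v vs ih =>
    have ih := ih fun b hb => h b (List.mem_cons_of_mem _ hb)
    intro w hw
    simp only [spanL, List.mem_append, List.mem_map] at hw
    rcases hw with hw | ⟨a, ha, rfl⟩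
    · exact ih w hw
    · exact code_xor hL (h v List.mem_cons_self) (ih a ha)

/-- Signed permutation matrices, times two. -/
def monoN (p : List ℕ) (neg : List ℕ) (i j : ℕ) : ℤ :=
  if p.getD i 0 = j then (if neg.contains i then -2 else 2) else 0

def parity : ℕ → ℕ → ℕ
  | 0, _ => 0
  | f + 1, n => n % 2 + parity f (n / 2)

def genH : Gen where
  N i j := if i % 4 = j % 4 then
      (if i % 8 = 0 then -1 else 1) * (if j % 8 = 0 then -1 else 1) *
        (if parity 4 (i &&& j &&& 12) % 2 = 1 then -1 else 1)
    else 0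
  M := [40, 24, 8, 4, 6, 5, 132, 72]

def genS12 : Gen where
  N := monoN [0, 1, 4, 5, 2, 3, 6, 7, 8, 9, 12, 13, 10, 11, 14, 15] []
  M := [1, 4, 2, 8, 16, 64, 32, 128]

def genS23 : Gen where
  N := monoN [0, 1, 2, 3, 8, 9, 10, 11, 4, 5, 6, 7, 12, 13, 14, 15] [4, 8]
  M := [1, 2, 8, 4, 28, 44, 132, 72]

def genT : Gen where
  N := monoN [0, 1, 2, 3, 12, 13, 14, 15, 8, 9, 10, 11, 4, 5, 6, 7] []
  M := [1, 2, 12, 8, 16, 32, 64, 200]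

def genX : Gen where
  N i j := if i / 4 = j / 4 then
      zl ((if i / 4 % 2 = 0 then
        [[1, -1, -1, -1], [-1, 1, -1, -1], [-1, -1, -1, 1], [-1, -1, 1, -1]]
        else [[1, 1, 1, 1], [1, 1, -1, -1], [1, -1, -1, 1], [1, -1, 1, -1]]).getD (i % 4) [])
        (j % 4)
    else 0
  M := [1, 3, 128, 72, 120, 96, 64, 4]

def genZ : Gen where
  N := monoN (List.range 16) [3, 7, 11, 15]
  M := [1, 2, 4, 8, 16, 32, 72, 132]

def allGens : List Gen := [genH, genS12, genS23, genT, genX, genZ]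

lemma allGens_ok : allGens.all Gen.ok = true := by decide +kernel

/-- Lattices over `BW16` whose code contains the span of `B`. -/
def St (B : List ℕ) (L : Submodule ℤ (E 16)) : Prop := Good L ∧ ∀ b ∈ B, dd b ∈ L

/-- `c` can be moved into the set of codes with bit mask `S`. -/
def Movable (B : List ℕ) (S : ℕ) (c : ℕ) : Prop :=
  ∀ L, St B L → dd c ∈ L → ∃ L', IsometricLattices L L' ∧ St B L' ∧ ∃ t < 256,
    S.testBit t = true ∧ dd t ∈ L'

def chainStep (gens : List Gen) (S S' : ℕ) : Bool :=
  (List.range 256).all fun c => !S'.testBit c || (S.testBit c || gens.any fun g =>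
    decide (act g.M c < 256) && S.testBit (act g.M c))

def chainOK (gens : List Gen) : ℕ → List ℕ → Bool
  | _, [] => true
  | S, S' :: r => chainStep gens S S' && chainOK gens S' r

def stab (B : List ℕ) (gens : List Gen) : Bool :=
  gens.all fun g => B.all fun b => (spanL B).contains (act g.M b)

lemma St.spanL {B : List ℕ} {L : Submodule ℤ (E 16)} (h : St B L) : ∀ w ∈ spanL B, dd w ∈ L :=
  spanL_mem h.1.2 B h.2

lemma movable_gen {B : List ℕ} {gens : List Gen} (hs : stab B gens = true) {g : Gen}
    (hg : g ∈ gens) (hok : g.ok = true) {S c : ℕ} (h : Movable B S (act g.M c)) :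
    Movable B S c := by
  intro L hL hc
  have h1 : St B (g.img L) := by
    refine ⟨Gen.good_img hok hL.1, fun b hb => ?_⟩
    rw [Gen.code_img hok hL.1]
    have := List.all_eq_true.1 (List.all_eq_true.1 hs g hg) b hb
    exact hL.spanL _ (by simpa using this)
  have h2 : dd (act g.M c) ∈ g.img L := by
    rw [← code_congr h1.1.2 (Gen.lin_dd hok c), Gen.mem_img, Gen.lin_lin _ (Gen.ok_orth hok)]
    exact hc
  obtain ⟨L', a, b⟩ := h _ h1 h2
  exact ⟨L', isom_trans (g.isom_img (Gen.ok_orth hok) L) a, b⟩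

lemma movable_chain {B : List ℕ} {gens : List Gen} (hs : stab B gens = true)
    (hok : ∀ g ∈ gens, g.ok = true) (T : ℕ) (r : List ℕ) :
    ∀ S, (∀ c < 256, S.testBit c = true → Movable B T c) → chainOK gens S r = true →
    ∀ c < 256, (r.getLastD S).testBit c = true → Movable B T c := by
  induction r with
  | nil => intro S h _; simpa using h
  | cons S' r ih =>
    intro S h hc
    simp only [chainOK, Bool.and_eq_true] at hc
    rw [List.getLastD_cons]
    refine ih S' (fun c hc256 hS' => ?_) hc.2
    have h1 := List.all_eq_true.1 hc.1 c (List.mem_range.2 hc256)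
    simp only [hS', Bool.not_true, Bool.false_or, Bool.or_eq_true, List.any_eq_true,
      Bool.and_eq_true, decide_eq_true_eq] at h1
    rcases h1 with h1 | ⟨g, hg, h2, h3⟩
    · exact h c hc256 h1
    · exact movable_gen hs hg (hok g hg) (h _ h2 h3)

/-- Certificate for one step of the classification. -/
structure Stage where
  B : List ℕ
  gens : List Gen
  T : List ℕ
  S : ℕ
  r : List ℕ
  S' : ℕ
  r' : List ℕ

def Stage.ok (s : Stage) : Bool :=
  stab s.B s.gens && chainOK s.gens s.S s.r && chainOK s.gens s.S' s.r' &&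
  (List.range 256).all fun c =>
    (!s.S.testBit c || s.T.any fun t => (spanL s.B).contains (c ^^^ t)) &&
    (!s.S'.testBit c || (spanL s.B).contains (c ^^^ 136)) &&
    (!(s.B.all fun b => orth c b) || (spanL s.B).contains c ||
      (if isEven c then (s.r.getLastD s.S).testBit c else (s.r'.getLastD s.S').testBit c)) &&
    (!(s.B.all fun b => orth c b) || !orth c 136 || (spanL (136 :: s.B)).contains c ||
      (isEven c && !(spanL s.B).contains c) ||
      (isEven (c ^^^ 136) && !(spanL s.B).contains (c ^^^ 136)))

lemma Stage.main (s : Stage) (hs : s.ok = true) (hok : ∀ g ∈ s.gens, g.ok = true)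
    {L : Submodule ℤ (E 16)} (hL : St s.B L) :
    ∃ L', IsometricLattices L L' ∧ St s.B L' ∧
      ((∃ t ∈ s.T, dd t ∈ L') ∨
       (dd 136 ∈ L' ∧ ∀ c < 256, dd c ∈ L' → c ∈ spanL (136 :: s.B)) ∨
       (∀ c < 256, dd c ∈ L' → c ∈ spanL s.B)) := by
  simp only [Stage.ok, Bool.and_eq_true] at hs
  obtain ⟨⟨⟨h1, h2⟩, h3⟩, h4⟩ := hs
  have h4 := fun c (hc : c < 256) => List.all_eq_true.1 h4 c (List.mem_range.2 hc)
  simp only [Bool.and_eq_true] at h4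
  have hstart : ∀ S c, c < 256 → S.testBit c = true → Movable s.B S c := fun S c hc hS L hL hcL =>
    ⟨L, isom_refl L, hL, c, hc, hS, hcL⟩
  have e1 := movable_chain h1 hok s.S s.r s.S (hstart s.S) h2
  have e2 := movable_chain h1 hok s.S' s.r' s.S' (hstart s.S') h3
  have horth : ∀ L', St s.B L' → ∀ c, dd c ∈ L' → (s.B.all fun b => orth c b) = true := by
    intro L' hL' c hc
    exact List.all_eq_true.2 fun b hb => orth_of_mem hL'.1 hc (hL'.2 b hb)
  have hback : ∀ L', St s.B L' → ∀ c t, dd c ∈ L' → c ^^^ t ∈ spanL s.B → dd t ∈ L' := by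
    intro L' hL' c t hc ht
    have := code_xor hL'.1.2 hc (hL'.spanL _ ht)
    rwa [← Nat.xor_assoc, Nat.xor_self, Nat.zero_xor] at this
  by_cases hE : ∃ L', IsometricLattices L L' ∧ St s.B L' ∧ ∃ c < 256, dd c ∈ L' ∧
      isEven c = true ∧ c ∉ spanL s.B
  · obtain ⟨L', i1, hL', c, hc, hcL, ev, hn⟩ := hE
    have h5 := (h4 c hc).1.2
    have hb := horth L' hL' c hcL
    rw [hb] at h5
    simp [ev, hn] at h5
    obtain ⟨L'', i2, hL'', t, ht, hS, htL⟩ := e1 c hc (by simpa using h5) L' hL' hcL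
    refine ⟨L'', isom_trans i1 i2, hL'', Or.inl ?_⟩
    have h6 := (h4 t ht).1.1.1
    rw [hS] at h6
    simp at h6
    obtain ⟨t', ht', h6⟩ := h6
    exact ⟨t', ht', hback L'' hL'' t t' htL h6⟩
  · by_cases hO : ∃ c < 256, dd c ∈ L ∧ c ∉ spanL s.B
    · obtain ⟨c, hc, hcL, hn⟩ := hO
      have ev : isEven c = false := by
        by_contra h
        exact hE ⟨L, isom_refl L, hL, c, hc, hcL, by simpa using h, hn⟩
      have h5 := (h4 c hc).1.2
      have hb := horth L hL c hcL
      rw [hb] at h5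
      simp [ev, hn] at h5
      obtain ⟨L', i1, hL', t, ht, hS, htL⟩ := e2 c hc (by simpa using h5) L hL hcL
      have h6 := (h4 t ht).1.1.2
      rw [hS] at h6
      simp at h6
      have h136 := hback L' hL' t 136 htL h6
      refine ⟨L', i1, hL', Or.inr (Or.inl ⟨h136, fun c hc hcL => ?_⟩)⟩
      have h7 := (h4 c hc).2
      rw [horth L' hL' c hcL, orth_of_mem hL'.1 hcL h136] at h7
      simp only [Bool.not_true, Bool.false_or, Bool.or_eq_true, Bool.and_eq_true,
        List.contains_iff_mem, Bool.not_eq_true', Bool.not_eq_eq_eq_not] at h7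
      rcases h7 with (h7 | ⟨h7, h8⟩) | ⟨h7, h8⟩
      · exact h7
      · exact absurd ⟨L', i1, hL', c, hc, hcL, h7, by simpa using h8⟩ hE
      · exact absurd ⟨L', i1, hL', c ^^^ 136, Nat.xor_lt_two_pow (n := 8) hc (by norm_num),
          code_xor hL'.1.2 hcL h136, h7, by simpa using h8⟩ hE
    · push Not at hO
      exact ⟨L, isom_refl L, hL, Or.inr (Or.inr hO)⟩

def stage0 : Stage where
  B := []
  gens := allGens
  T := [1]
  S := 2
  r := [1099511627778,
    4722366483969156841474,
    340282366920938468204187835474634604802,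
    1606938044258990275547746892578818556405821175337180056256786,
    1707371672399321586927191799878047518255195078265436142309686,
    26959954802274495222106417261220400788507236332802419493394255460286,
    138061887305605300173895004135347833586243051153102581002077567054823422,
    143239895227405763913166795134895864647498756739058348266507031620485118,
    484314603745809810607812529264886346296076361480510025560178011465896558590,
    18584116792062820020387624137227586795115260900308605441179997201500311257086,
    47758295532476144883088971011513224609441162116888236213192856956018573574142]
  S' := 87112285931760246646623899502532662132736
  r' := [6277101735386682244744650263131859484266510713433614188544,
    25717285809880692592901918174366978171259021440177482959421440,
    6901746372532958005776956886633612119076673491503532761129300875280384,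
    7440952247848346544382184233073358849947165833834492266115967494389760,
    2215999889355935869703075588251172365940184777363736941623632929491124224,
    9953982311724421509529998350102937315589499953218159358120959228882245517312,
    10123614296183752417345984347797938043639500296314828394920932151145441918976,
    68033793704840050540482013997174683243828822548752327826264727051894556065792]

lemma stage0_ok : stage0.ok = true := by decide +kernel

def stage1 : Stage where
  B := [1]
  gens := [genS12, genS23, genT, genX, genZ]
  T := [2]
  S := 12
  r := [60,
    1020847100762815390390123822295304647484,
    4820814132776970826643240677736455669217408185776007620345660,
    5122115017197964760781575399633904870334710839525174094610428,
    80879864406823485666319251781619508103148845751781702751323313733628,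
    414185660673045854265226522009427151584796725651761847361703818767171580,
    419361970433138777105802588906134920678029280024790757999473584181936124]
  S' := 261336857795280739939871698507597986398208
  r' := [18831305206160046734233950789395578452799532140300842565632,
    77151857429642077778705754523100934513777064320532448878264320,
    20705239117598874017330870659900836357230020414215423030081884157640704,
    22322836226160016974572752947267276163673492060430568294846570558390272,
    1347458134809948264162045878504456163034529803632388606931139413177008128]

lemma stage1_ok : stage1.ok = true := by decide +kernel

def stage2 : Stage where
  B := [2, 1]
  gens := [genS23, genT, genX, genZ]
  T := [4]
  S := 240
  r := [5104235503814076951950619111476523237360,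
    24104070663884854133216203388682278346087040928880038101712880,
    25610575080377657516536792850252118285951882936712512028082160]
  S' := 1306684288976403699699358492537989931991040
  r' := [94156526030800233671169753946977892263997660701504212828160,
    385759287148188466363742071915826002497597143387149474977546240]

lemma stage2_ok : stage2.ok = true := by decide +kernel

def stage3 : Stage where
  B := [4, 2, 1]
  gens := []
  T := [8, 128]
  S := 86772003564839308183160524895100893986560
  r := []
  S' := 22213632912598862894889094373145828843847680
  r' := []

lemma stage3_ok : stage3.ok = true := by decide +kernel

/-! ## The ten lattices -/

lemma fin_eq {L T : Submodule ℤ (E 16)} (hL : Good L) (B : List ℕ)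
    (hC : ∀ c < 256, dd c ∈ L → c ∈ spanL B) (hT : BW16 ≤ T) (hB : ∀ b ∈ B, dd b ∈ T)
    (hTL : T ≤ L) : L = T := by
  refine le_antisymm (fun x hx => ?_) hTL
  obtain ⟨c, hc, hcL, h⟩ := cover hL hx
  exact (code_congr hT h).2 (spanL_mem hT B hB c (hC c hc hcL))

lemma two_eps (i : Fin 16) : εv i + εv i ∈ BW16 := by
  rw [← two_smul ℝ]
  exact Submodule.subset_span (Or.inl ⟨i, rfl⟩)

lemma root_iff {L : Submodule ℤ (E 16)} (hL : BW16 ≤ L) (i j : Fin 16) :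
    εv i + εv j ∈ L ↔ dd (i.1 ^^^ j.1) ∈ L := by
  have h : ((List.range 16).all fun i => (List.range 16).all fun j => inBW (2 •
      (((fun k => if k = i then 2 else 0) + fun k => if k = j then 2 else 0) - DD (i ^^^ j))))
      = true := by decide +kernel
  have h' := HH_mem (List.all_eq_true.1 (List.all_eq_true.1 h i.1 (List.mem_range.2 i.2)) j.1
    (List.mem_range.2 j.2))
  rw [map_sub, map_add, ← eps_HH, ← eps_HH] at h'
  exact code_congr hL h'

lemma root_sub {L : Submodule ℤ (E 16)} (hL : BW16 ≤ L) {i j : Fin 16} (h : εv i + εv j ∈ L) :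
    εv i - εv j ∈ L := by
  have := L.sub_mem h (hL (two_eps j))
  convert this using 1; abel

lemma f1_iff {L : Submodule ℤ (E 16)} (hL : BW16 ≤ L) : f1 ∈ L ↔ dd 136 ∈ L := by
  have h : inBW (2 • (zl [1, 1, 1, 1, 1, 1, 1, 1, 2, 0, 0, 0, 0, 0, 0, 0] - DD 136)) = true := by
    decide +kernel
  have h' := HH_mem h
  rw [map_sub, ← f1_HH] at h'
  exact code_congr hL h'

lemma h_iff {L : Submodule ℤ (E 16)} (hL : BW16 ≤ L) : h1 - εv 0 ∈ L ↔ dd 128 ∈ L := by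
  have h : ∀ k < 16, DD 128 k = zl [-1, 1, 1, 1, 1, 1, 1, 1] k := by decide +kernel
  have : h1 - εv 0 = dd 128 := by
    ext k
    rw [dd, HH_apply, h k.1 k.2]
    fin_cases k <;> simp [h1, vec, εv, zl] <;> norm_num
  rw [this]

lemma setA1_sub {L : Submodule ℤ (E 16)} (hL : BW16 ≤ L) (h : dd 1 ∈ L) : setA1 ⊆ L := by
  have hx : ∀ i < 8, 2 * i ^^^ (2 * i + 1) = 1 := by decide
  rintro v ⟨i, rfl | rfl⟩
  · exact (root_iff hL _ _).2 (by simpa only [hx i.1 i.2] using h)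
  · exact root_sub hL ((root_iff hL _ _).2 (by simpa only [hx i.1 i.2] using h))

lemma setD4_sub {L : Submodule ℤ (E 16)} (hL : BW16 ≤ L) (h : ∀ b ∈ [2, 1], dd b ∈ L) :
    setD4 ⊆ L := by
  have hx : ∀ i < 16, ∀ j < 16, i / 4 = j / 4 → i ^^^ j ∈ spanL [2, 1] := by decide +kernel
  rintro v ⟨i, j, -, hij, hv⟩
  have := (root_iff hL _ _).2 (spanL_mem hL _ h _ (hx i.1 i.2 j.1 j.2 hij))
  rcases hv with rfl | rfl
  · exact this
  · exact root_sub hL this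

lemma setD8_sub {L : Submodule ℤ (E 16)} (hL : BW16 ≤ L) (h : ∀ b ∈ [4, 2, 1], dd b ∈ L) :
    setD8 ⊆ L := by
  have hx : ∀ i < 16, ∀ j < 16, i / 8 = j / 8 → i ^^^ j ∈ spanL [4, 2, 1] := by decide +kernel
  rintro v ⟨i, j, -, hij, hv⟩
  have := (root_iff hL _ _).2 (spanL_mem hL _ h _ (hx i.1 i.2 j.1 j.2 hij))
  rcases hv with rfl | rfl
  · exact this
  · exact root_sub hL this

lemma A1_D4 : setA1 ⊆ setD4 := by
  rintro v ⟨i, hv⟩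
  exact ⟨_, _, by simp, by simp; omega, hv⟩

lemma D4_D8 : setD4 ⊆ setD8 := by
  rintro v ⟨i, j, h1, h2, hv⟩
  exact ⟨i, j, h1, by omega, hv⟩

lemma BW_A1 {T : Submodule ℤ (E 16)} (h : setA1 ⊆ T) (hf : f0 ∈ T) (k1 : g1 ∈ T) (k2 : g2 ∈ T)
    (k3 : g3 ∈ T) (k4 : g4 ∈ T) : BW16 ≤ T := by
  have hp : ∀ i : Fin 8, εv ⟨2 * i.1, by have := i.2; omega⟩
      + εv ⟨2 * i.1 + 1, by have := i.2; omega⟩ ∈ T := fun i => h ⟨i, Or.inl rfl⟩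
  have hm : ∀ i : Fin 8, εv ⟨2 * i.1, by have := i.2; omega⟩
      - εv ⟨2 * i.1 + 1, by have := i.2; omega⟩ ∈ T := fun i => h ⟨i, Or.inr rfl⟩
  have hg : ∀ i : Fin 8, εv 0 + εv 1 + εv ⟨2 * i.1, by have := i.2; omega⟩
      + εv ⟨2 * i.1 + 1, by have := i.2; omega⟩ ∈ T := by
    intro i
    have := T.add_mem (hp 0) (hp i)
    rw [← add_assoc] at this
    exact this
  rw [BW16, Submodule.span_le]
  rintro x (⟨i, rfl⟩ | hx)
  · show (2 : ℝ) • εv i ∈ T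
    obtain ⟨k, hk⟩ : ∃ k : Fin 8, i = ⟨2 * k.1, by have := k.2; omega⟩ ∨
        i = ⟨2 * k.1 + 1, by have := k.2; omega⟩ :=
      ⟨⟨i.1 / 2, by have := i.2; omega⟩, by simp only [Fin.ext_iff]; omega⟩
    rw [two_smul]
    rcases hk with rfl | rfl
    · convert T.add_mem (hp k) (hm k) using 1; abel
    · convert T.sub_mem (hp k) (hm k) using 1; abel
  · simp only [Set.mem_insert_iff, Set.mem_singleton_iff] at hx
    rcases hx with rfl | rfl | rfl | rfl | rfl | rfl | rfl | rfl | rfl | rfl | rfl | rfl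
    · exact hf
    · exact k1
    · exact k2
    · exact k3
    · exact k4
    · exact hg 1
    · exact hg 2
    · exact hg 3
    · exact hg 4
    · exact hg 5
    · exact hg 6
    · exact hg 7

lemma BW_D4 {T : Submodule ℤ (E 16)} (h : setD4 ⊆ T) (hf : f0 ∈ T) (k1 : g1 ∈ T) : BW16 ≤ T := by
  have hp : ∀ i j : Fin 16, i.1 < j.1 → i.1 / 4 = j.1 / 4 → εv i + εv j ∈ T :=
    fun i j a b => h ⟨i, j, a, b, Or.inl rfl⟩
  refine BW_A1 (A1_D4.trans h) hf k1 ?_ ?_ ?_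
  · convert T.add_mem (hp 0 2 (by decide) (by decide)) (hp 4 6 (by decide) (by decide)) using 1
    rw [g2]; abel
  · convert T.add_mem (hp 0 2 (by decide) (by decide)) (hp 8 10 (by decide) (by decide)) using 1
    rw [g3]; abel
  · convert T.add_mem (hp 0 2 (by decide) (by decide)) (hp 12 14 (by decide) (by decide)) using 1
    rw [g4]; abel

lemma BW_D8 {T : Submodule ℤ (E 16)} (h : setD8 ⊆ T) (hf : f0 ∈ T) : BW16 ≤ T := by
  have hp : ∀ i j : Fin 16, i.1 < j.1 → i.1 / 8 = j.1 / 8 → εv i + εv j ∈ T :=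
    fun i j a b => h ⟨i, j, a, b, Or.inl rfl⟩
  refine BW_D4 (D4_D8.trans h) hf ?_
  convert T.add_mem (hp 0 4 (by decide) (by decide)) (hp 8 12 (by decide) (by decide)) using 1
  rw [g1]; abel

lemma codes_A1 {T : Submodule ℤ (E 16)} (hT : BW16 ≤ T) (h : setA1 ⊆ T) : ∀ b ∈ [1], dd b ∈ T := by
  have h1 : dd 1 ∈ T := (root_iff hT 0 1).1 (h ⟨0, Or.inl rfl⟩)
  simpa using h1

lemma codes_D4 {T : Submodule ℤ (E 16)} (hT : BW16 ≤ T) (h : setD4 ⊆ T) :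
    ∀ b ∈ [2, 1], dd b ∈ T := by
  have h1 := codes_A1 hT (A1_D4.trans h)
  have h2 : dd 2 ∈ T := (root_iff hT 0 2).1 (h ⟨0, 2, by decide, by decide, Or.inl rfl⟩)
  exact List.forall_mem_cons.2 ⟨h2, h1⟩

lemma codes_D8 {T : Submodule ℤ (E 16)} (hT : BW16 ≤ T) (h : setD8 ⊆ T) :
    ∀ b ∈ [4, 2, 1], dd b ∈ T := by
  have h1 := codes_D4 hT (D4_D8.trans h)
  have h2 : dd 4 ∈ T := (root_iff hT 0 4).1 (h ⟨0, 4, by decide, by decide, Or.inl rfl⟩)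
  exact List.forall_mem_cons.2 ⟨h2, h1⟩

lemma f0_BW : f0 ∈ BW16 := Submodule.subset_span (Or.inr (by simp))
lemma g1_BW : g1 ∈ BW16 := Submodule.subset_span (Or.inr (by simp))
lemma g2_BW : g2 ∈ BW16 := Submodule.subset_span (Or.inr (by simp))
lemma g3_BW : g3 ∈ BW16 := Submodule.subset_span (Or.inr (by simp))
lemma g4_BW : g4 ∈ BW16 := Submodule.subset_span (Or.inr (by simp))

lemma span_le_aux {L : Submodule ℤ (E 16)} {s t : Set (E 16)} (hs : s ⊆ L) (ht : ∀ x ∈ t, x ∈ L) :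
    Submodule.span ℤ (s ∪ t) ≤ L :=
  Submodule.span_le.2 (Set.union_subset hs ht)

section targets
variable {L : Submodule ℤ (E 16)}

lemma eq_BW (hL : St [] L) (hC : ∀ c < 256, dd c ∈ L → c ∈ spanL []) : L = BW16 :=
  fin_eq hL.1 [] hC le_rfl (by simp) hL.1.2

lemma eq_O (hL : St [] L) (h : dd 136 ∈ L) (hC : ∀ c < 256, dd c ∈ L → c ∈ spanL [136]) :
    L = O16 := by
  have h0 : BW16 ≤ O16 := le_sup_left
  refine fin_eq hL.1 [136] hC h0 ?_ ?_
  · have : dd 136 ∈ O16 := (f1_iff h0).1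
      ((le_sup_right : Submodule.span ℤ {f1} ≤ O16) (Submodule.subset_span (by simp)))
    simpa using this
  · refine sup_le hL.1.2 (Submodule.span_le.2 ?_)
    simpa using (f1_iff hL.1.2).2 h

lemma eq_LP1 (hL : St [1] L) (hC : ∀ c < 256, dd c ∈ L → c ∈ spanL [1]) : L = Λ'16_2_1 := by
  have hs : setA1 ⊆ Λ'16_2_1 := fun x hx => Submodule.subset_span (Or.inl hx)
  have ht : ∀ x ∈ ({f0, g1, g2, g3, g4} : Set (E 16)), x ∈ Λ'16_2_1 :=
    fun x hx => Submodule.subset_span (Or.inr hx)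
  have h0 : BW16 ≤ Λ'16_2_1 := BW_A1 hs (ht _ (by simp)) (ht _ (by simp)) (ht _ (by simp))
    (ht _ (by simp)) (ht _ (by simp))
  refine fin_eq hL.1 [1] hC h0 (codes_A1 h0 hs) (span_le_aux (setA1_sub hL.1.2 (hL.2 1 (by simp))) ?_)
  rintro x (rfl | rfl | rfl | rfl | rfl)
  exacts [hL.1.2 f0_BW, hL.1.2 g1_BW, hL.1.2 g2_BW, hL.1.2 g3_BW, hL.1.2 g4_BW]

lemma eq_LL1 (hL : St [1] L) (h : dd 136 ∈ L) (hC : ∀ c < 256, dd c ∈ L → c ∈ spanL [136, 1]) :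
    L = Λ16_2_1 := by
  have hs : setA1 ⊆ Λ16_2_1 := fun x hx => Submodule.subset_span (Or.inl hx)
  have ht : ∀ x ∈ ({f0, f1, g1, g2, g3, g4} : Set (E 16)), x ∈ Λ16_2_1 :=
    fun x hx => Submodule.subset_span (Or.inr hx)
  have h0 : BW16 ≤ Λ16_2_1 := BW_A1 hs (ht _ (by simp)) (ht _ (by simp)) (ht _ (by simp))
    (ht _ (by simp)) (ht _ (by simp))
  refine fin_eq hL.1 _ hC h0 (List.forall_mem_cons.2
    ⟨(f1_iff h0).1 (ht _ (by simp)), codes_A1 h0 hs⟩)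
    (span_le_aux (setA1_sub hL.1.2 (hL.2 1 (by simp))) ?_)
  rintro x (rfl | rfl | rfl | rfl | rfl | rfl)
  exacts [hL.1.2 f0_BW, (f1_iff hL.1.2).2 h, hL.1.2 g1_BW, hL.1.2 g2_BW, hL.1.2 g3_BW, hL.1.2 g4_BW]

lemma eq_LP2 (hL : St [2, 1] L) (hC : ∀ c < 256, dd c ∈ L → c ∈ spanL [2, 1]) : L = Λ'16_2_2 := by
  have hs : setD4 ⊆ Λ'16_2_2 := fun x hx => Submodule.subset_span (Or.inl hx)
  have ht : ∀ x ∈ ({f0, g1} : Set (E 16)), x ∈ Λ'16_2_2 :=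
    fun x hx => Submodule.subset_span (Or.inr hx)
  have h0 : BW16 ≤ Λ'16_2_2 := BW_D4 hs (ht _ (by simp)) (ht _ (by simp))
  refine fin_eq hL.1 _ hC h0 (codes_D4 h0 hs) (span_le_aux (setD4_sub hL.1.2 hL.2) ?_)
  rintro x (rfl | rfl)
  exacts [hL.1.2 f0_BW, hL.1.2 g1_BW]

lemma eq_LL2 (hL : St [2, 1] L) (h : dd 136 ∈ L)
    (hC : ∀ c < 256, dd c ∈ L → c ∈ spanL [136, 2, 1]) : L = Λ16_2_2 := by
  have hs : setD4 ⊆ Λ16_2_2 := fun x hx => Submodule.subset_span (Or.inl hx)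
  have ht : ∀ x ∈ ({f0, f1, g1} : Set (E 16)), x ∈ Λ16_2_2 :=
    fun x hx => Submodule.subset_span (Or.inr hx)
  have h0 : BW16 ≤ Λ16_2_2 := BW_D4 hs (ht _ (by simp)) (ht _ (by simp))
  refine fin_eq hL.1 _ hC h0 (List.forall_mem_cons.2
    ⟨(f1_iff h0).1 (ht _ (by simp)), codes_D4 h0 hs⟩) (span_le_aux (setD4_sub hL.1.2 hL.2) ?_)
  rintro x (rfl | rfl | rfl)
  exacts [hL.1.2 f0_BW, (f1_iff hL.1.2).2 h, hL.1.2 g1_BW]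

lemma eq_LP3 (hL : St [4, 2, 1] L) (hC : ∀ c < 256, dd c ∈ L → c ∈ spanL [4, 2, 1]) :
    L = Λ'16_2_3 := by
  have hs : setD8 ⊆ Λ'16_2_3 := fun x hx => Submodule.subset_span (Or.inl hx)
  have ht : f0 ∈ Λ'16_2_3 := Submodule.subset_span (Or.inr (by simp))
  have h0 : BW16 ≤ Λ'16_2_3 := BW_D8 hs ht
  refine fin_eq hL.1 _ hC h0 (codes_D8 h0 hs) (span_le_aux (setD8_sub hL.1.2 hL.2) ?_)
  rintro x rfl
  exact hL.1.2 f0_BW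

lemma eq_LL3 (hL : St [4, 2, 1] L) (h : dd 136 ∈ L)
    (hC : ∀ c < 256, dd c ∈ L → c ∈ spanL [136, 4, 2, 1]) : L = Λ16_2_3 := by
  have hs : setD8 ⊆ Λ16_2_3 := fun x hx => Submodule.subset_span (Or.inl hx)
  have ht : ∀ x ∈ ({f0, f1} : Set (E 16)), x ∈ Λ16_2_3 :=
    fun x hx => Submodule.subset_span (Or.inr hx)
  have h0 : BW16 ≤ Λ16_2_3 := BW_D8 hs (ht _ (by simp))
  refine fin_eq hL.1 _ hC h0 (List.forall_mem_cons.2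
    ⟨(f1_iff h0).1 (ht _ (by simp)), codes_D8 h0 hs⟩) (span_le_aux (setD8_sub hL.1.2 hL.2) ?_)
  rintro x (rfl | rfl)
  exacts [hL.1.2 f0_BW, (f1_iff hL.1.2).2 h]

lemma max_code (hL : Good L) (B : List ℕ) (hB : ∀ b ∈ B, dd b ∈ L)
    (h : ((List.range 256).all fun c => !(B.all fun b => orth c b) || (spanL B).contains c) = true) :
    ∀ c < 256, dd c ∈ L → c ∈ spanL B := by
  intro c hc hcL
  have h1 := List.all_eq_true.1 h c (List.mem_range.2 hc)
  have h2 : (B.all fun b => orth c b) = true :=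
    List.all_eq_true.2 fun b hb => orth_of_mem hL hcL (hB b hb)
  rw [h2] at h1
  simpa using h1

lemma eq_D16 (hL : St [4, 2, 1] L) (h : dd 8 ∈ L) : L = D16plus := by
  have hs : setD8 ⊆ D16plus := fun x hx => Submodule.subset_span (Or.inl hx)
  have ht : ∀ x ∈ ({εv 0 + εv 8, f0} : Set (E 16)), x ∈ D16plus :=
    fun x hx => Submodule.subset_span (Or.inr hx)
  have h0 : BW16 ≤ D16plus := BW_D8 hs (ht _ (by simp))
  have hC := max_code hL.1 [8, 4, 2, 1] (List.forall_mem_cons.2 ⟨h, hL.2⟩) (by decide +kernel)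
  refine fin_eq hL.1 _ hC h0 (List.forall_mem_cons.2
    ⟨(root_iff h0 0 8).1 (ht _ (by simp)), codes_D8 h0 hs⟩)
    (span_le_aux (setD8_sub hL.1.2 hL.2) ?_)
  rintro x (rfl | rfl)
  exacts [(root_iff hL.1.2 0 8).2 h, hL.1.2 f0_BW]

/-- The isometry changing the signs of the coordinates `0` and `8`. -/
def sig : Gen where
  N := monoN (List.range 16) [0, 8]
  M := []

lemma sig_orth : sig.orthOK = true := by decide +kernel

lemma sig_apply (x : E 16) (i : Fin 16) :
    sig.lin x i = if i.1 % 8 = 0 then - x i else x i := by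
  have h : ∀ i < 16, ∀ j < 16, sig.N i j = if i = j then (if i % 8 = 0 then -2 else 2) else 0 := by
    decide +kernel
  rw [Gen.lin_apply, Finset.sum_eq_single i]
  · rw [h i.1 i.2 i.1 i.2, if_pos rfl]
    split_ifs <;> push_cast <;> ring
  · intro j _ hj
    rw [h i.1 i.2 j.1 j.2, if_neg (fun e => hj (Fin.ext e.symm))]
    simp
  · simp

lemma sig_eps (i : Fin 16) : sig.lin (εv i) = εv i ∨ sig.lin (εv i) = - εv i := by
  by_cases hi : i.1 % 8 = 0
  · right
    ext k
    rw [sig_apply]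
    by_cases hk : k = i
    · subst hk; simp [hi]
    · simp [εv, hk]
  · left
    ext k
    rw [sig_apply]
    by_cases hk : k = i
    · subst hk; simp [hi]
    · simp [εv, hk]

lemma sig_D8 (h : setD8 ⊆ L) : setD8 ⊆ sig.img L := by
  rintro v ⟨i, j, hlt, hij, hv⟩
  have hp : εv i + εv j ∈ L := h ⟨i, j, hlt, hij, Or.inl rfl⟩
  have hm : εv i - εv j ∈ L := h ⟨i, j, hlt, hij, Or.inr rfl⟩
  have hp' := L.neg_mem hp
  have hm' := L.neg_mem hm
  show sig.lin v ∈ L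
  rcases hv with rfl | rfl <;> rcases sig_eps i with h1 | h1 <;> rcases sig_eps j with h2 | h2
  · rw [map_add, h1, h2]; exact hp
  · rw [map_add, h1, h2]; convert hm using 1; abel
  · rw [map_add, h1, h2]; convert hm' using 1; abel
  · rw [map_add, h1, h2]; convert hp' using 1; abel
  · rw [map_sub, h1, h2]; exact hm
  · rw [map_sub, h1, h2]; convert hp using 1; abel
  · rw [map_sub, h1, h2]; convert hp' using 1; abel
  · rw [map_sub, h1, h2]; convert hm' using 1; abel

lemma sig_h1 : sig.lin h1 = h1 - εv 0 := by
  ext k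
  rw [sig_apply]
  fin_cases k <;> simp [h1, vec, εv] <;> norm_num

lemma sig_h2 : sig.lin h2 = f0 - (h1 - εv 0) := by
  ext k
  rw [sig_apply]
  fin_cases k <;> simp [h1, h2, f0, vec, εv] <;> norm_num

lemma eq_E8 (hL : St [4, 2, 1] L) (h : dd 128 ∈ L) : L = sig.img E8E8 := by
  have hs : setD8 ⊆ E8E8 := fun x hx => Submodule.subset_span (Or.inl hx)
  have ht : ∀ x ∈ ({h1, h2} : Set (E 16)), x ∈ E8E8 := fun x hx => Submodule.subset_span (Or.inr hx)
  have hh : h1 - εv 0 ∈ sig.img E8E8 := by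
    rw [Gen.mem_img, ← sig_h1, sig.lin_lin sig_orth]
    exact ht _ (by simp)
  have hf : f0 ∈ sig.img E8E8 := by
    have : f0 = sig.lin h2 + (h1 - εv 0) := by rw [sig_h2]; abel
    rw [this]
    refine Submodule.add_mem _ ?_ hh
    rw [Gen.mem_img, sig.lin_lin sig_orth]
    exact ht _ (by simp)
  have h0 : BW16 ≤ sig.img E8E8 := BW_D8 (sig_D8 hs) hf
  have hC := max_code hL.1 [128, 4, 2, 1] (List.forall_mem_cons.2 ⟨h, hL.2⟩) (by decide +kernel)
  refine fin_eq hL.1 _ hC h0 (List.forall_mem_cons.2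
    ⟨(h_iff h0).1 hh, codes_D8 h0 (sig_D8 hs)⟩) ?_
  have hle : E8E8 ≤ sig.img L := by
    refine span_le_aux (sig_D8 (setD8_sub hL.1.2 hL.2)) ?_
    have h3 := (h_iff hL.1.2).2 h
    rintro x (rfl | rfl)
    · rw [Gen.mem_img, sig_h1]; exact h3
    · rw [Gen.mem_img, sig_h2]; exact L.sub_mem (hL.1.2 f0_BW) h3
  intro x hx
  have := hle hx
  rw [Gen.mem_img] at this
  erw [sig.lin_lin sig_orth] at this
  exact this

end targets

lemma isom_E8 : IsometricLattices (sig.img E8E8) E8E8 := by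
  have := sig.isom_img sig_orth (sig.img E8E8)
  have e : sig.img (sig.img E8E8) = E8E8 := by
    ext x
    rw [Gen.mem_img, Gen.mem_img, sig.lin_lin sig_orth]
  rwa [e] at this

lemma gens_ok {l : List Gen} (h : l ⊆ allGens) : ∀ g ∈ l, g.ok = true :=
  fun g hg => List.all_eq_true.1 allGens_ok g (h hg)

/-- Every integral lattice in `ℝ¹⁶` containing `BW₁₆` is isometric to one of the ten
lattices `BW₁₆`, `O₁₆`, `Λ_{16,2,1}`, `Λ_{16,2,2}`, `Λ_{16,2,3}`, `Λ'_{16,2,1}`,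
`Λ'_{16,2,2}`, `Λ'_{16,2,3}`, `D₁₆⁺`, `E₈ ⊥ E₈`. -/
theorem integral_lattices_containing_BW16 (L : Submodule ℤ (E 16))
    (hL : LatticeIsIntegral L) (hBW : BW16 ≤ L) :
    IsometricLattices L BW16 ∨ IsometricLattices L O16 ∨
    IsometricLattices L Λ16_2_1 ∨ IsometricLattices L Λ16_2_2 ∨ IsometricLattices L Λ16_2_3 ∨
    IsometricLattices L Λ'16_2_1 ∨ IsometricLattices L Λ'16_2_2 ∨ IsometricLattices L Λ'16_2_3 ∨
    IsometricLattices L D16plus ∨ IsometricLattices L E8E8 := by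
  have hL0 : St [] L := ⟨⟨hL, hBW⟩, by simp⟩
  obtain ⟨L1, i1, s1, h1⟩ := stage0.main stage0_ok (gens_ok (List.Subset.refl _)) hL0
  rcases h1 with ⟨t, ht, h⟩ | ⟨h, hC⟩ | hC
  rotate_left
  · exact Or.inr (Or.inl (eq_O s1 h hC ▸ i1))
  · exact Or.inl (eq_BW s1 hC ▸ i1)
  obtain rfl : t = 1 := List.mem_singleton.1 ht
  obtain ⟨L2, i2, s2, h2⟩ := stage1.main stage1_ok
    (gens_ok (by simp [stage1, allGens])) (L := L1) ⟨s1.1, List.forall_mem_cons.2 ⟨h, s1.2⟩⟩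
  have i2 := isom_trans i1 i2
  rcases h2 with ⟨t, ht, h⟩ | ⟨h, hC⟩ | hC
  rotate_left
  · have := eq_LL1 s2 h hC ▸ i2
    tauto
  · have := eq_LP1 s2 hC ▸ i2
    tauto
  obtain rfl : t = 2 := List.mem_singleton.1 ht
  obtain ⟨L3, i3, s3, h3⟩ := stage2.main stage2_ok
    (gens_ok (by simp [stage2, allGens])) (L := L2) ⟨s2.1, List.forall_mem_cons.2 ⟨h, s2.2⟩⟩
  have i3 := isom_trans i2 i3
  rcases h3 with ⟨t, ht, h⟩ | ⟨h, hC⟩ | hC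
  rotate_left
  · have := eq_LL2 s3 h hC ▸ i3
    tauto
  · have := eq_LP2 s3 hC ▸ i3
    tauto
  obtain rfl : t = 4 := List.mem_singleton.1 ht
  obtain ⟨L4, i4, s4, h4⟩ := stage3.main stage3_ok
    (gens_ok (by simp [stage3])) (L := L3) ⟨s3.1, List.forall_mem_cons.2 ⟨h, s3.2⟩⟩
  have i4 := isom_trans i3 i4
  rcases h4 with ⟨t, ht, h⟩ | ⟨h, hC⟩ | hC
  rotate_left
  · have := eq_LL3 s4 h hC ▸ i4
    tauto
  · have := eq_LP3 s4 hC ▸ i4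
    tauto
  have ht : t = 8 ∨ t = 128 := by simpa [stage3] using ht
  rcases ht with rfl | rfl
  · have := eq_D16 s4 h ▸ i4
    tauto
  · have := isom_trans (eq_E8 s4 h ▸ i4) isom_E8
    tauto
end
end

section
/- The quotient group BW16♯/BW16 has exactly 2^8 = 256 elements, and its cosets consist of: the zero coset; exactly 135 cosets whose minimal norm (the minimum of ‖x‖² over x in the coset) equals 2; and exactly 120 cosets whose minimal norm equals 3. -/
noncomputable section

open scoped RealInnerProductSpace

/-- The dual lattice `Λ♯ = {x : ⟪x,y⟫ ∈ ℤ for all y ∈ Λ}`. -/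
def dualLattice {n : ℕ} (Λ : Submodule ℤ (E n)) : Submodule ℤ (E n) where
  carrier := {x | ∀ y ∈ Λ, ∃ k : ℤ, ⟪x, y⟫ = (k : ℝ)}
  zero_mem' := fun y _ => ⟨0, by simp⟩
  add_mem' := by
    intro a b ha hb y hy
    obtain ⟨k, hk⟩ := ha y hy
    obtain ⟨l, hl⟩ := hb y hy
    exact ⟨k + l, by rw [inner_add_left, hk, hl]; push_cast; ring⟩
  smul_mem' := by
    intro c x hx y hy
    obtain ⟨k, hk⟩ := hx y hy
    refine ⟨c * k, ?_⟩
    rw [← Int.cast_smul_eq_zsmul ℝ c x, real_inner_smul_left, hk]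
    push_cast
    ring

/-- The quotient abelian group `Λ♯/Λ`. -/
abbrev DualQuot {n : ℕ} (Λ : Submodule ℤ (E n)) :=
  (dualLattice Λ) ⧸ (Λ.comap (dualLattice Λ).subtype)

/-- The coset `c ∈ Λ♯/Λ` has minimal norm `m`, i.e. `m` is the minimum of `‖x‖²`
over `x` in the coset `c`. -/
def CosetMinNorm {n : ℕ} (Λ : Submodule ℤ (E n)) (c : DualQuot Λ) (m : ℝ) : Prop :=
  IsLeast {r : ℝ | ∃ x : dualLattice Λ, Submodule.Quotient.mk x = c ∧ r = ‖(x : E n)‖ ^ 2} m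

/-! Integer model: the vector `h : Fin 16 → ℤ` stands for `h / 2` in `ℝ^16`. -/

/-- The vector `2 f0`. -/
def FI : Fin 16 → ℤ := ![-1, 1, 1, 1, 1, 1, 1, 1, -1, 1, 1, 1, 1, 1, 1, 1]

/-- `2 f0` restricted to the indices having bit `k`. -/
def WI (k : Fin 4) : Fin 16 → ℤ := fun i => if Nat.testBit i.val k.val then FI i else 0

/-- The vectors `2 g1, …, 2 g11`. -/
def GI : Fin 11 → Fin 16 → ℤ := ![
  ![2, 0, 0, 0, 2, 0, 0, 0, 2, 0, 0, 0, 2, 0, 0, 0],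
  ![2, 0, 2, 0, 2, 0, 2, 0, 0, 0, 0, 0, 0, 0, 0, 0],
  ![2, 0, 2, 0, 0, 0, 0, 0, 2, 0, 2, 0, 0, 0, 0, 0],
  ![2, 0, 2, 0, 0, 0, 0, 0, 0, 0, 0, 0, 2, 0, 2, 0],
  ![2, 2, 2, 2, 0, 0, 0, 0, 0, 0, 0, 0, 0, 0, 0, 0],
  ![2, 2, 0, 0, 2, 2, 0, 0, 0, 0, 0, 0, 0, 0, 0, 0],
  ![2, 2, 0, 0, 0, 0, 2, 2, 0, 0, 0, 0, 0, 0, 0, 0],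
  ![2, 2, 0, 0, 0, 0, 0, 0, 2, 2, 0, 0, 0, 0, 0, 0],
  ![2, 2, 0, 0, 0, 0, 0, 0, 0, 0, 2, 2, 0, 0, 0, 0],
  ![2, 2, 0, 0, 0, 0, 0, 0, 0, 0, 0, 0, 2, 2, 0, 0],
  ![2, 2, 0, 0, 0, 0, 0, 0, 0, 0, 0, 0, 0, 0, 2, 2]]

/-- The integer product. -/
def dotI (a b : Fin 16 → ℤ) : ℤ :=
  a 0 * b 0 + a 1 * b 1 + a 2 * b 2 + a 3 * b 3 + a 4 * b 4 + a 5 * b 5 + a 6 * b 6 + a 7 * b 7 +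
  a 8 * b 8 + a 9 * b 9 + a 10 * b 10 + a 11 * b 11 + a 12 * b 12 + a 13 * b 13 + a 14 * b 14 +
  a 15 * b 15

lemma dotI_add (a b c : Fin 16 → ℤ) : dotI a (b + c) = dotI a b + dotI a c := by
  simp only [dotI, Pi.add_apply]; ring

lemma dotI_sub (a b c : Fin 16 → ℤ) : dotI a (b - c) = dotI a b - dotI a c := by
  simp only [dotI, Pi.sub_apply]; ring

lemma dotI_smul (a : Fin 16 → ℤ) (t : ℤ) (c : Fin 16 → ℤ) : dotI a (t • c) = t * dotI a c := by
  simp only [dotI, Pi.smul_apply, smul_eq_mul]; ring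

lemma dotI_zero (a : Fin 16 → ℤ) : dotI a 0 = 0 := by
  simp [dotI]

lemma dotI_comm (a b : Fin 16 → ℤ) : dotI a b = dotI b a := by
  simp only [dotI]; ring

lemma dotI_FI (h : Fin 16 → ℤ) : dotI FI h = -h 0 + h 1 + h 2 + h 3 + h 4 + h 5 + h 6 + h 7
    - h 8 + h 9 + h 10 + h 11 + h 12 + h 13 + h 14 + h 15 := by
  have e : ∀ i, FI i = if i = 0 ∨ i = 8 then -1 else 1 := by decide
  simp [dotI, e]; ring

lemma FI_pm : ∀ i, FI i = 1 ∨ FI i = -1 := by decide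

lemma dotI_W0 (h : Fin 16 → ℤ) :
    dotI (WI 0) h = h 1 + h 3 + h 5 + h 7 + h 9 + h 11 + h 13 + h 15 := by
  have e : WI 0 = ![0, 1, 0, 1, 0, 1, 0, 1, 0, 1, 0, 1, 0, 1, 0, 1] := by decide
  rw [e]; simp [dotI]

lemma dotI_W1 (h : Fin 16 → ℤ) :
    dotI (WI 1) h = h 2 + h 3 + h 6 + h 7 + h 10 + h 11 + h 14 + h 15 := by
  have e : WI 1 = ![0, 0, 1, 1, 0, 0, 1, 1, 0, 0, 1, 1, 0, 0, 1, 1] := by decide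
  rw [e]; simp [dotI]

lemma dotI_W2 (h : Fin 16 → ℤ) :
    dotI (WI 2) h = h 4 + h 5 + h 6 + h 7 + h 12 + h 13 + h 14 + h 15 := by
  have e : WI 2 = ![0, 0, 0, 0, 1, 1, 1, 1, 0, 0, 0, 0, 1, 1, 1, 1] := by decide
  rw [e]; simp [dotI]

lemma dotI_W3 (h : Fin 16 → ℤ) :
    dotI (WI 3) h = - h 8 + h 9 + h 10 + h 11 + h 12 + h 13 + h 14 + h 15 := by
  have e : WI 3 = ![0, 0, 0, 0, 0, 0, 0, 0, -1, 1, 1, 1, 1, 1, 1, 1] := by decide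
  rw [e]; simp [dotI]

/-- The integer model of `BW16`, by congruences. -/
def LI : Submodule ℤ (Fin 16 → ℤ) where
  carrier := {h | (∀ i, 2 ∣ h i - h 0) ∧ 4 ∣ dotI FI h ∧ ∀ k, 4 ∣ dotI (WI k) h}
  zero_mem' := by simp [dotI_zero]
  add_mem' := by
    rintro a b ⟨a1, a2, a3⟩ ⟨b1, b2, b3⟩
    refine ⟨fun i => ?_, ?_, fun k => ?_⟩
    · have := a1 i; have := b1 i; simp only [Pi.add_apply]; omega
    · rw [dotI_add]; exact dvd_add a2 b2
    · rw [dotI_add]; exact dvd_add (a3 k) (b3 k)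
  smul_mem' := by
    rintro t a ⟨a1, a2, a3⟩
    refine ⟨fun i => ?_, ?_, fun k => ?_⟩
    · simp only [Pi.smul_apply, smul_eq_mul, ← mul_sub]; exact (a1 i).mul_left t
    · rw [dotI_smul]; exact a2.mul_left t
    · rw [dotI_smul]; exact (a3 k).mul_left t

lemma mem_LI (h : Fin 16 → ℤ) :
    h ∈ LI ↔ (∀ i, 2 ∣ h i - h 0) ∧ 4 ∣ dotI FI h ∧ ∀ k, 4 ∣ dotI (WI k) h := Iff.rfl

instance (h : Fin 16 → ℤ) : Decidable (h ∈ LI) := decidable_of_iff' _ (mem_LI h)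

/-- The integer generators. -/
def gensI : Set (Fin 16 → ℤ) := (Set.range fun i : Fin 16 => Pi.single i 4) ∪
  ({FI} ∪ Set.range GI)

set_option maxHeartbeats 1000000 in
lemma code_lemma (y : Fin 16 → ℤ) (hF : 2 ∣ dotI FI y) (hW : ∀ k, 2 ∣ dotI (WI k) y) :
    ∃ (a : Fin 11 → ℤ) (z : Fin 16 → ℤ), ∀ i, 2 * y i = ∑ j, a j * GI j i + 4 * z i := by
  have k0 := hW 0; have k1 := hW 1; have k2 := hW 2; have k3 := hW 3
  rw [dotI_W0] at k0; rw [dotI_W1] at k1; rw [dotI_W2] at k2; rw [dotI_W3] at k3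
  rw [dotI_FI] at hF
  clear hW
  obtain ⟨t, ht⟩ := hF
  obtain ⟨t0, ht0⟩ := k0
  obtain ⟨t1, ht1⟩ := k1
  obtain ⟨t2, ht2⟩ := k2
  obtain ⟨t3, ht3⟩ := k3
  have key : ∀ i, ∃ z, 2 * y i - ∑ j, (![y 12 - y 13 - y 14 + y 15, y 6 - y 7, y 10 - y 11,
      y 14 - y 15, y 3, y 5, y 7, y 9, y 11, y 13, y 15] : Fin 11 → ℤ) j * GI j i = 4 * z := by
    intro i
    simp only [Fin.sum_univ_succ]
    fin_cases i <;> simp [GI] <;> apply (dvd_def).1 <;> omega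
  choose z hz using key
  exact ⟨_, z, fun i => by rw [← hz i]; ring⟩

lemma LI_eq_span : LI = Submodule.span ℤ gensI := by
  apply le_antisymm
  · intro h hh
    obtain ⟨h1, h2, h3⟩ := (mem_LI h).1 hh
    have hy : ∀ i, ∃ y, h i = h 1 * FI i + 2 * y := by
      intro i
      have a := h1 i; have b := h1 1
      have e := FI_pm i
      rcases e with e | e <;> rw [e]
      · exact ⟨(h i - h 1) / 2, by omega⟩
      · exact ⟨(h i + h 1) / 2, by omega⟩
    choose y hy using hy
    have e : h = h 1 • FI + (2 : ℤ) • y := by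
      ext i; simpa using hy i
    have eF : dotI FI h = 16 * h 1 + 2 * dotI FI y := by
      conv_lhs => rw [e]
      rw [dotI_add, dotI_smul, dotI_smul, show dotI FI FI = 16 by decide]; ring
    have eW : ∀ k, dotI (WI k) h = 8 * h 1 + 2 * dotI (WI k) y := by
      intro k
      have e8 : ∀ k, dotI (WI k) FI = 8 := by decide
      conv_lhs => rw [e]
      rw [dotI_add, dotI_smul, dotI_smul, e8]; ring
    obtain ⟨a, z, hz⟩ := code_lemma y (by omega)
      (fun k => by have := h3 k; have := eW k; omega)
    have hh : h = h 1 • FI + ∑ j, a j • GI j + ∑ i, z i • (Pi.single i 4 : Fin 16 → ℤ) := by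
      ext i
      have := hz i
      have := hy i
      simp only [Pi.add_apply, Pi.smul_apply, Finset.sum_apply, smul_eq_mul, Pi.single_apply,
        mul_ite, mul_zero, Finset.sum_ite_eq, Finset.mem_univ, if_true]
      linarith
    rw [hh]
    refine add_mem (add_mem (Submodule.smul_mem _ _ (Submodule.subset_span ?_))
      (Submodule.sum_mem _ fun j _ => Submodule.smul_mem _ _ (Submodule.subset_span ?_)))
      (Submodule.sum_mem _ fun j _ => Submodule.smul_mem _ _ (Submodule.subset_span ?_))
    · exact Or.inr (Or.inl rfl)
    · exact Or.inr (Or.inr ⟨j, rfl⟩)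
    · exact Or.inl ⟨j, rfl⟩
  · rw [Submodule.span_le]
    rintro _ (⟨i, rfl⟩ | (rfl | ⟨j, rfl⟩))
    · revert i; show ∀ i : Fin 16, (Pi.single i 4 : Fin 16 → ℤ) ∈ LI; decide +kernel
    · show FI ∈ LI; decide +kernel
    · revert j; show ∀ j, GI j ∈ LI; decide +kernel

/-- The integer model of the dual. -/
def DI : Submodule ℤ (Fin 16 → ℤ) where
  carrier := {h | ∀ l ∈ LI, 4 ∣ dotI l h}
  zero_mem' := by simp [dotI_zero]
  add_mem' := by
    intro a b ha hb l hl
    rw [dotI_add]; exact dvd_add (ha l hl) (hb l hl)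
  smul_mem' := by
    intro t a ha l hl
    rw [dotI_smul]; exact (ha l hl).mul_left t

lemma mem_DI_of (h : Fin 16 → ℤ) (h1 : 4 ∣ dotI FI h) (h2 : ∀ j, 4 ∣ dotI (GI j) h) : h ∈ DI := by
  intro l hl
  rw [LI_eq_span] at hl
  induction hl using Submodule.span_induction with
  | mem x hx =>
    rcases hx with ⟨i, rfl⟩ | (rfl | ⟨j, rfl⟩)
    · fin_cases i <;> simp [dotI]
    · exact h1
    · exact h2 j
  | zero => rw [dotI_comm, dotI_zero]; simp
  | add x y _ _ hx hy => rw [dotI_comm, dotI_add, dotI_comm h, dotI_comm h]; exact dvd_add hx hy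
  | smul t x _ hx => rw [dotI_comm, dotI_smul, dotI_comm h]; exact hx.mul_left t

lemma DI_F {h : Fin 16 → ℤ} (hh : h ∈ DI) : 4 ∣ dotI FI h :=
  hh FI (by decide +kernel)

lemma DI_W {h : Fin 16 → ℤ} (hh : h ∈ DI) (k : Fin 4) : 2 ∣ dotI (WI k) h := by
  have := hh ((2 : ℤ) • WI k) (by revert k; decide +kernel)
  rw [dotI_comm, dotI_smul, dotI_comm] at this
  omega

lemma DI_par {h : Fin 16 → ℤ} (hh : h ∈ DI) :
    (2 ∣ h 3 - h 0 - h 1 - h 2) ∧ (2 ∣ h 5 - h 0 - h 1 - h 4) ∧ (2 ∣ h 6 - h 0 - h 2 - h 4) ∧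
    (2 ∣ h 7 - h 1 - h 2 - h 4) ∧ (2 ∣ h 9 - h 0 - h 1 - h 8) ∧ (2 ∣ h 10 - h 0 - h 2 - h 8) ∧
    (2 ∣ h 11 - h 1 - h 2 - h 8) ∧ (2 ∣ h 12 - h 0 - h 4 - h 8) ∧ (2 ∣ h 13 - h 1 - h 4 - h 8) ∧
    (2 ∣ h 14 - h 2 - h 4 - h 8) ∧ (2 ∣ h 15 - h 0 - h 1 - h 2 - h 4 - h 8) := by
  have hG : ∀ j, 4 ∣ dotI (GI j) h := fun j => hh (GI j) (by revert j; decide +kernel)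
  have a0 : 2 ∣ h 0 + h 4 + h 8 + h 12 := by
    have := hG 0; simp [dotI, GI] at this; omega
  have a1 : 2 ∣ h 0 + h 2 + h 4 + h 6 := by
    have := hG 1; simp [dotI, GI] at this; omega
  have a2 : 2 ∣ h 0 + h 2 + h 8 + h 10 := by
    have := hG 2; simp [dotI, GI] at this; omega
  have a3 : 2 ∣ h 0 + h 2 + h 12 + h 14 := by
    have := hG 3; simp [dotI, GI] at this; omega
  have a4 : 2 ∣ h 0 + h 1 + h 2 + h 3 := by
    have := hG 4; simp [dotI, GI] at this; omega
  have a5 : 2 ∣ h 0 + h 1 + h 4 + h 5 := by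
    have := hG 5; simp [dotI, GI] at this; omega
  have a6 : 2 ∣ h 0 + h 1 + h 6 + h 7 := by
    have := hG 6; simp [dotI, GI] at this; omega
  have a7 : 2 ∣ h 0 + h 1 + h 8 + h 9 := by
    have := hG 7; simp [dotI, GI] at this; omega
  have a8 : 2 ∣ h 0 + h 1 + h 10 + h 11 := by
    have := hG 8; simp [dotI, GI] at this; omega
  have a9 : 2 ∣ h 0 + h 1 + h 12 + h 13 := by
    have := hG 9; simp [dotI, GI] at this; omega
  have a10 : 2 ∣ h 0 + h 1 + h 14 + h 15 := by
    have := hG 10; simp [dotI, GI] at this; omega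
  clear hG
  have p : ∀ a b c d : ℤ, 2 ∣ a + b + c + d → 2 ∣ d - a - b - c := by intros; omega
  have q : ∀ a b c d x y : ℤ, 2 ∣ a + b + c + d → 2 ∣ c - a - x - y → 2 ∣ d - b - x - y := by
    intros; omega
  have t : ∀ a b c d x y z : ℤ, 2 ∣ a + b + c + d → 2 ∣ c - x - y - z →
      2 ∣ d - a - b - x - y - z := by
    intros; omega
  have c6 := p _ _ _ _ a1
  have c10 := p _ _ _ _ a2
  have c12 := p _ _ _ _ a0
  have c14 := q _ _ _ _ _ _ a3 c12
  exact ⟨p _ _ _ _ a4, p _ _ _ _ a5, c6, q _ _ _ _ _ _ a6 c6, p _ _ _ _ a7, c10,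
    q _ _ _ _ _ _ a8 c10, c12, q _ _ _ _ _ _ a9 c12, c14, t _ _ _ _ _ _ _ a10 c14⟩

/-- Elements of the dual that are congruent to zero for the key lie in the lattice. -/
lemma LI_of_DI {h : Fin 16 → ℤ} (hh : h ∈ DI) (h1 : 2 ∣ h 1 - h 0) (h2 : 2 ∣ h 2 - h 0)
    (h4 : 2 ∣ h 4 - h 0) (h8 : 2 ∣ h 8 - h 0) (hW : ∀ k, 4 ∣ dotI (WI k) h) : h ∈ LI := by
  refine ⟨fun i => ?_, DI_F hh, hW⟩
  obtain ⟨a3, a5, a6, a7, a9, a10, a11, a12, a13, a14, a15⟩ := DI_par hh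
  fin_cases i <;> simp <;> omega

lemma sq_par (a : ℤ) : ∃ k, a * a = a + 2 * k := by
  obtain ⟨k, hk⟩ := Int.even_mul_pred_self a
  exact ⟨k, by linarith⟩

lemma LI_even {h : Fin 16 → ℤ} (hh : h ∈ LI) : 8 ∣ dotI h h := by
  obtain ⟨h1, h2, -⟩ := hh
  have hy : ∀ i, ∃ y, h i = h 1 * FI i + 2 * y := by
    intro i
    have a := h1 i; have b := h1 1
    have e := FI_pm i
    rcases e with e | e <;> rw [e]
    · exact ⟨(h i - h 1) / 2, by omega⟩
    · exact ⟨(h i + h 1) / 2, by omega⟩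
  choose y hy using hy
  have e : h = h 1 • FI + (2 : ℤ) • y := by
    ext i; simpa using hy i
  have hFF : dotI FI FI = 16 := by decide
  have e1 : dotI FI h = 16 * h 1 + 2 * dotI FI y := by
    conv_lhs => rw [e]
    rw [dotI_add, dotI_smul, dotI_smul, hFF]; ring
  have e2 : dotI h h = 16 * (h 1 * h 1) + 4 * (h 1 * dotI FI y) + 4 * dotI y y := by
    conv_lhs => rw [e]
    rw [dotI_add, dotI_smul, dotI_smul, dotI_comm _ FI, dotI_comm _ y, dotI_add, dotI_add,
      dotI_smul, dotI_smul, dotI_smul, dotI_smul, hFF, dotI_comm y FI]; ring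
  have e3 : 2 ∣ dotI FI y := by omega
  have e4 : 2 ∣ dotI y y - dotI FI y := by
    choose k hk using fun i => sq_par (y i)
    rw [dotI_FI]; simp only [dotI, hk]; omega
  have e5 : 2 ∣ h 1 * dotI FI y := e3.mul_left _
  omega

lemma sq_ge (a : ℤ) : a % 2 ≤ a * a := by
  rcases Int.emod_two_eq_zero_or_one a with h | h <;> rw [h]
  · exact mul_self_nonneg a
  · have : a ≠ 0 := by rintro rfl; simp at h
    have := mul_self_pos.2 this
    omega

lemma par3 (a b c d : ℤ) (h : 2 ∣ a - b - c - d) : a % 2 = (b % 2 + c % 2 + d % 2) % 2 := by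
  omega

lemma par5 (a b c d e f : ℤ) (h : 2 ∣ a - b - c - d - e - f) :
    a % 2 = (b % 2 + c % 2 + d % 2 + e % 2 + f % 2) % 2 := by
  omega

lemma DI_norm {h : Fin 16 → ℤ} (hh : h ∈ DI) : dotI h h ≠ 4 := by
  intro hn
  have hF := DI_F hh
  obtain ⟨a3, a5, a6, a7, a9, a10, a11, a12, a13, a14, a15⟩ := DI_par hh
  by_cases hev : ∀ i, 2 ∣ h i
  · clear a3 a5 a6 a7 a9 a10 a11 a12 a13 a14 a15
    choose y hy using hev
    have e : dotI h h = 4 * dotI y y := by simp only [dotI, hy]; ring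
    have eee : dotI FI h = 2 * dotI FI y := by simp only [dotI, hy]; ring
    have e4 : 2 ∣ dotI y y - dotI FI y := by
      choose k hk using fun i => sq_par (y i)
      clear hn hF e eee hy
      rw [dotI_FI]; simp only [dotI, hk]; omega
    clear hy
    omega
  · have hb : h 0 % 2 + h 1 % 2 + h 2 % 2 + h 3 % 2 + h 4 % 2 + h 5 % 2 + h 6 % 2 + h 7 % 2 +
        h 8 % 2 + h 9 % 2 + h 10 % 2 + h 11 % 2 + h 12 % 2 + h 13 % 2 + h 14 % 2 + h 15 % 2 ≤ 4 := by
      rw [← hn]; unfold dotI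
      exact add_le_add (add_le_add (add_le_add (add_le_add (add_le_add (add_le_add
        (add_le_add (add_le_add (add_le_add (add_le_add (add_le_add (add_le_add (add_le_add
        (add_le_add (add_le_add (sq_ge _) (sq_ge _)) (sq_ge _)) (sq_ge _)) (sq_ge _)) (sq_ge _))
        (sq_ge _)) (sq_ge _)) (sq_ge _)) (sq_ge _)) (sq_ge _)) (sq_ge _)) (sq_ge _)) (sq_ge _))
        (sq_ge _)) (sq_ge _)
    clear hn hF
    have mfif := par5 _ _ _ _ _ _ a15
    have b3 := par3 _ _ _ _ a3; have b5 := par3 _ _ _ _ a5; have b6 := par3 _ _ _ _ a6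
    have b7 := par3 _ _ _ _ a7; have b9 := par3 _ _ _ _ a9; have b10 := par3 _ _ _ _ a10
    have b11 := par3 _ _ _ _ a11; have b12 := par3 _ _ _ _ a12; have b13 := par3 _ _ _ _ a13
    have b14 := par3 _ _ _ _ a14
    clear a3 a5 a6 a7 a9 a10 a11 a12 a13 a14 a15
    rw [b3, b5, b6, b7, b9, b10, b11, b12, b13, b14, mfif] at hb
    have hz : h 0 % 2 = 0 ∧ h 1 % 2 = 0 ∧ h 2 % 2 = 0 ∧ h 4 % 2 = 0 ∧ h 8 % 2 = 0 := by
      have p0 := Int.emod_two_eq_zero_or_one (h 0)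
      have p1 := Int.emod_two_eq_zero_or_one (h 1)
      have p2 := Int.emod_two_eq_zero_or_one (h 2)
      have p4 := Int.emod_two_eq_zero_or_one (h 4)
      have p8 := Int.emod_two_eq_zero_or_one (h 8)
      clear b3 b5 b6 b7 b9 b10 b11 b12 b13 b14 mfif hev hh
      generalize h 0 % 2 = q0 at *
      generalize h 1 % 2 = q1 at *
      generalize h 2 % 2 = q2 at *
      generalize h 4 % 2 = q4 at *
      generalize h 8 % 2 = q8 at *
      rcases p0 with rfl | rfl <;> rcases p1 with rfl | rfl <;> rcases p2 with rfl | rfl <;>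
        rcases p4 with rfl | rfl <;> rcases p8 with rfl | rfl <;>
        first | (exfalso; revert hb; norm_num; done) | norm_num
    obtain ⟨z0, z1, z2, z4, z8⟩ := hz
    rw [z0, z1, z2] at b3; rw [z0, z1, z4] at b5; rw [z0, z2, z4] at b6; rw [z1, z2, z4] at b7
    rw [z0, z1, z8] at b9; rw [z0, z2, z8] at b10; rw [z1, z2, z8] at b11
    rw [z0, z4, z8] at b12; rw [z1, z4, z8] at b13; rw [z2, z4, z8] at b14
    rw [z0, z1, z2, z4, z8] at mfif
    apply hev
    intro i
    apply Int.dvd_of_emod_eq_zero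
    fin_cases i
    exacts [z0, z1, z2, b3, z4, b5, b6, b7, z8, b9, b10, b11, b12, b13, b14, mfif]

/-- Parity of the bitwise product. -/
def bitpar (a b : ℕ) : Bool :=
  ((a.testBit 0 && b.testBit 0) ^^ (a.testBit 1 && b.testBit 1)) ^^
  ((a.testBit 2 && b.testBit 2) ^^ (a.testBit 3 && b.testBit 3))

/-- A short representative of the class with key `(c, s)`. -/
def rep (b : Fin 16 × Fin 16) : Fin 16 → ℤ := fun i =>
  let c := b.1.val
  let u := b.2.val ^^^ (c &&& 8)
  let i0 := if c.testBit 0 then 1 else if c.testBit 1 then 2 else if c.testBit 2 then 4 else 0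
  let m : Bool := if c.testBit 3 then i.val == u else (i.val == i0) ^^ (i.val == i0 ^^^ u)
  if bitpar c i.val then (if m then -1 else 1) else (if m then 2 else 0)

lemma rep_DI (b : Fin 16 × Fin 16) : rep b ∈ DI := by
  apply mem_DI_of
  · revert b; decide +kernel
  · revert b; decide +kernel

lemma rep_norm (b : Fin 16 × Fin 16) :
    (b = 0 ∧ dotI (rep b) (rep b) = 0) ∨ dotI (rep b) (rep b) = 8 ∨ dotI (rep b) (rep b) = 12 := by
  revert b; decide +kernel

/-- The key of an integer vector. -/
def keyC (h : Fin 16 → ℤ) (k : Fin 4) : ℤ := (h ⟨2 ^ k.val, by revert k; decide⟩ - h 0) % 2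

/-- The second half of the key. -/
def keyS (h : Fin 16 → ℤ) (k : Fin 4) : ℤ := (dotI (WI k) h / 2) % 2

lemma rep_keyC (b : Fin 16 × Fin 16) (k : Fin 4) :
    keyC (rep b) k = if b.1.val.testBit k.val then 1 else 0 := by
  revert b k; decide +kernel

lemma rep_keyS (b : Fin 16 × Fin 16) (k : Fin 4) :
    keyS (rep b) k = if b.2.val.testBit k.val then 1 else 0 := by
  revert b k; decide +kernel

lemma key_surj (t : Fin 4 → ℤ) (ht : ∀ k, t k = 0 ∨ t k = 1) :
    ∃ c : Fin 16, ∀ k : Fin 4, t k = if c.val.testBit k.val then 1 else 0 := by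
  have h : ∀ p : Fin 4 → Bool, ∃ c : Fin 16, ∀ k : Fin 4, c.val.testBit k.val = p k := by
    decide +kernel
  obtain ⟨c, hc⟩ := h (fun k => decide (t k = 1))
  refine ⟨c, fun k => ?_⟩
  rw [hc]
  rcases ht k with e | e <;> simp [e]

lemma exists_rep {h : Fin 16 → ℤ} (hh : h ∈ DI) : ∃ b, h - rep b ∈ LI := by
  obtain ⟨c, hc⟩ := key_surj (keyC h) (fun k => Int.emod_two_eq_zero_or_one _)
  obtain ⟨s, hs⟩ := key_surj (keyS h) (fun k => Int.emod_two_eq_zero_or_one _)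
  have hC : ∀ k, keyC h k = keyC (rep (c, s)) k := fun k => by rw [hc, rep_keyC]
  have hS : ∀ k, keyS h k = keyS (rep (c, s)) k := fun k => by rw [hs, rep_keyS]
  have hr := rep_DI (c, s)
  refine ⟨(c, s), LI_of_DI (sub_mem hh hr) ?_ ?_ ?_ ?_ ?_⟩
  · have := hC 0; simp [keyC] at this ⊢; omega
  · have := hC 1; simp [keyC] at this ⊢; omega
  · have := hC 2; simp [keyC] at this ⊢; omega
  · have := hC 3; simp [keyC] at this ⊢; omega
  · intro k
    have := hS k
    have a := DI_W hh k
    have b := DI_W hr k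
    rw [dotI_sub]; simp only [keyS] at this; omega

lemma rep_inj {b b' : Fin 16 × Fin 16} (hl : rep b - rep b' ∈ LI) : b = b' := by
  obtain ⟨h1, -, h3⟩ := hl
  have hC : ∀ k, keyC (rep b) k = keyC (rep b') k := by
    intro k
    have := h1 ⟨2 ^ k.val, by revert k; decide⟩
    simp only [Pi.sub_apply] at this
    simp only [keyC]; omega
  have hS : ∀ k, keyS (rep b) k = keyS (rep b') k := by
    intro k
    have := h3 k
    rw [dotI_sub] at this
    simp only [keyS]; omega
  have inj : ∀ c d : Fin 16, (∀ k : Fin 4, (if c.val.testBit k.val then (1 : ℤ) else 0) =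
      if d.val.testBit k.val then 1 else 0) → c = d := by decide +kernel
  apply Prod.ext
  · apply inj; intro k; rw [← rep_keyC, ← rep_keyC, hC]
  · apply inj; intro k; rw [← rep_keyS, ← rep_keyS, hS]

lemma dotI_nonneg (h : Fin 16 → ℤ) : 0 ≤ dotI h h := by
  have e : dotI h h = ∑ i, h i * h i := by simp [dotI, Fin.sum_univ_succ]; ring
  rw [e]; exact Finset.sum_nonneg fun i _ => mul_self_nonneg _

lemma dotI_self_eq_zero {h : Fin 16 → ℤ} (hh : dotI h h = 0) : h = 0 := by
  have e : dotI h h = ∑ i, h i * h i := by simp [dotI, Fin.sum_univ_succ]; ring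
  rw [e, Finset.sum_eq_zero_iff_of_nonneg (fun i _ => mul_self_nonneg _)] at hh
  ext i; simpa using hh i (Finset.mem_univ i)

lemma rep_min {h : Fin 16 → ℤ} (hh : h ∈ DI) (b : Fin 16 × Fin 16) (hl : h - rep b ∈ LI) :
    dotI (rep b) (rep b) ≤ dotI h h := by
  have h8 := LI_even hl
  have h4 := rep_DI b _ hl
  have e : dotI h h = dotI (rep b) (rep b) + 2 * dotI (h - rep b) (rep b) +
      dotI (h - rep b) (h - rep b) := by
    simp only [dotI, Pi.sub_apply]; ring
  have h0 := dotI_nonneg h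
  rcases rep_norm b with ⟨-, hb⟩ | hb | hb
  · omega
  · by_contra hlt
    have hz : dotI h h = 0 := by omega
    have hz := dotI_self_eq_zero hz
    have r0 : rep 0 = 0 := by decide +kernel
    rw [hz, ← r0] at hl
    have := rep_inj hl
    subst this
    rw [r0, dotI_zero] at hb
    omega
  · have := DI_norm hh
    omega

/-! Transfer to `ℝ^16`. -/

/-- The map `h ↦ h / 2`. -/
def ι : (Fin 16 → ℤ) →ₗ[ℤ] E 16 where
  toFun h := vec fun i => (h i : ℝ) / 2
  map_add' a b := by ext i; simp [vec]; ring
  map_smul' t a := by ext i; simp [vec]; ring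

lemma ι_apply (h : Fin 16 → ℤ) (i : Fin 16) : ι h i = (h i : ℝ) / 2 := rfl

lemma ι_inj : Function.Injective ι := by
  intro a b hab
  ext i
  have : ι a i = ι b i := by rw [hab]
  rw [ι_apply, ι_apply] at this
  have h : (a i : ℝ) = b i := by linarith
  exact_mod_cast h

lemma ι_inner (a b : Fin 16 → ℤ) : ⟪ι a, ι b⟫ = (dotI a b : ℝ) / 4 := by
  rw [PiLp.inner_apply]
  simp only [ι_apply, Fin.sum_univ_succ, dotI]
  simp
  ring

lemma ι_norm (a : Fin 16 → ℤ) : ‖ι a‖ ^ 2 = (dotI a a : ℝ) / 4 := by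
  rw [← real_inner_self_eq_norm_sq, ι_inner]

lemma ι_single (i : Fin 16) : ι (Pi.single i 4) = (2 : ℝ) • εv i := by
  ext j
  rw [ι_apply]
  by_cases h : j = i
  · subst h; simp [εv]; norm_num
  · simp [εv, h]

lemma ι_FI : ι FI = f0 := by
  ext j
  rw [ι_apply]
  fin_cases j <;> simp [FI, f0, vec]

lemma BW16_eq : BW16 = LI.map ι := by
  rw [LI_eq_span, Submodule.map_span, BW16]
  congr 1
  rw [gensI, Set.image_union, Set.image_union, ← Set.range_comp, ← Set.range_comp,
    Set.image_singleton, ι_FI]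
  congr 1
  · congr 1; ext1 i; exact (ι_single i).symm
  · have hg : ι ∘ GI = ![g1, g2, g3, g4, g5, g6, g7, g8, g9, g10, g11] := by
      ext j i
      rw [Function.comp_apply, ι_apply]
      fin_cases j <;> fin_cases i <;>
        simp [GI, g1, g2, g3, g4, g5, g6, g7, g8, g9, g10, g11, εv]
    rw [hg]
    simp only [Matrix.range_cons, Matrix.range_empty, Set.union_empty, Set.insert_eq]

lemma mem_dual (x : E 16) : x ∈ dualLattice BW16 ↔ ∃ h ∈ DI, ι h = x := by
  constructor
  · intro hx
    have hx' : ∀ l ∈ LI, ∃ k : ℤ, ⟪x, ι l⟫ = (k : ℝ) := by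
      intro l hl
      apply hx
      rw [BW16_eq]
      exact ⟨l, hl, rfl⟩
    have hc : ∀ i : Fin 16, ∃ k : ℤ, ⟪x, ι (Pi.single i 4)⟫ = (k : ℝ) := fun i => by
      apply hx'
      rw [LI_eq_span]
      exact Submodule.subset_span (Or.inl ⟨i, rfl⟩)
    choose h hh using hc
    have e : ι h = x := by
      ext i
      have := hh i
      rw [ι_single, real_inner_smul_right, εv, EuclideanSpace.inner_single_right] at this
      simp at this
      rw [ι_apply, ← this]; ring
    refine ⟨h, fun l hl => ?_, e⟩
    obtain ⟨k, hk⟩ := hx' l hl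
    rw [← e, ι_inner, dotI_comm] at hk
    refine ⟨k, ?_⟩
    have : (dotI l h : ℝ) = 4 * k := by linarith
    exact_mod_cast this
  · rintro ⟨h, hh, rfl⟩ y hy
    rw [BW16_eq] at hy
    obtain ⟨l, hl, rfl⟩ := hy
    obtain ⟨k, hk⟩ := hh l hl
    refine ⟨k, ?_⟩
    rw [ι_inner, dotI_comm, hk]; push_cast; ring

lemma ι_mem_BW (h : Fin 16 → ℤ) : ι h ∈ BW16 ↔ h ∈ LI := by
  rw [BW16_eq]
  constructor
  · rintro ⟨l, hl, e⟩
    rwa [← ι_inj e]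
  · intro hh; exact ⟨h, hh, rfl⟩

/-- The representative in the dual lattice. -/
def repD (b : Fin 16 × Fin 16) : dualLattice BW16 :=
  ⟨ι (rep b), (mem_dual _).2 ⟨_, rep_DI b, rfl⟩⟩

/-- The class of the representative. -/
def cls (b : Fin 16 × Fin 16) : DualQuot BW16 := Submodule.Quotient.mk (repD b)

lemma mk_eq_cls (h : Fin 16 → ℤ) (hx : ι h ∈ dualLattice BW16) (b : Fin 16 × Fin 16) :
    (Submodule.Quotient.mk ⟨ι h, hx⟩ : DualQuot BW16) = cls b ↔ h - rep b ∈ LI := by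
  rw [cls, Submodule.Quotient.eq, Submodule.mem_comap, ← ι_mem_BW, map_sub, map_sub]
  rfl

lemma cls_bij : Function.Bijective cls := by
  constructor
  · intro b b' hbb
    apply rep_inj
    exact (mk_eq_cls (rep b) ((mem_dual _).2 ⟨_, rep_DI b, rfl⟩) b').1 hbb
  · intro q
    obtain ⟨⟨x, hx⟩, rfl⟩ := Submodule.Quotient.mk_surjective _ q
    obtain ⟨h, hh, rfl⟩ := (mem_dual x).1 hx
    obtain ⟨b, hb⟩ := exists_rep hh
    exact ⟨b, ((mk_eq_cls h hx b).2 hb).symm⟩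

lemma cls_min (b : Fin 16 × Fin 16) :
    CosetMinNorm BW16 (cls b) ((dotI (rep b) (rep b) : ℝ) / 4) := by
  constructor
  · exact ⟨repD b, rfl, (ι_norm _).symm⟩
  · rintro r ⟨⟨x, hx⟩, he, rfl⟩
    obtain ⟨h, hh, rfl⟩ := (mem_dual x).1 hx
    have := rep_min hh b ((mk_eq_cls h hx b).1 he)
    rw [ι_norm]
    have : (dotI (rep b) (rep b) : ℝ) ≤ dotI h h := by exact_mod_cast this
    linarith

lemma cls_min_iff (b : Fin 16 × Fin 16) (n : ℤ) :
    CosetMinNorm BW16 (cls b) (n : ℝ) ↔ dotI (rep b) (rep b) = 4 * n := by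
  constructor
  · intro h
    have := IsLeast.unique h (cls_min b)
    have : (dotI (rep b) (rep b) : ℝ) = 4 * n := by linarith
    exact_mod_cast this
  · intro h
    have := cls_min b
    rw [h] at this
    convert this using 1
    push_cast; ring

lemma count_min (n : ℤ) : {c : DualQuot BW16 | CosetMinNorm BW16 c (n : ℝ)}.ncard =
    (Finset.univ.filter fun b => dotI (rep b) (rep b) = 4 * n).card := by
  rw [← Set.ncard_coe_finset, ← Set.ncard_image_of_injective _ cls_bij.1]
  congr 1
  ext c
  obtain ⟨b, rfl⟩ := cls_bij.2 c
  simp [cls_min_iff, cls_bij.1.eq_iff]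

lemma cls_zero : cls 0 = 0 := by
  have r0 : rep 0 = 0 := by decide +kernel
  rw [cls, Submodule.Quotient.mk_eq_zero, Submodule.mem_comap]
  show ι (rep 0) ∈ BW16
  rw [r0, map_zero]; exact zero_mem _

/-- The quotient `BW₁₆♯/BW₁₆` has exactly 2⁸ = 256 elements: the zero coset,
135 cosets of minimal norm 2, and 120 cosets of minimal norm 3. -/
theorem BW16_dual_quotient_classes :
    Nat.card (DualQuot BW16) = 256 ∧
    (∀ c : DualQuot BW16, c = 0 ∨ CosetMinNorm BW16 c 2 ∨ CosetMinNorm BW16 c 3) ∧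
    {c : DualQuot BW16 | CosetMinNorm BW16 c 2}.ncard = 135 ∧
    {c : DualQuot BW16 | CosetMinNorm BW16 c 3}.ncard = 120 := by
  refine ⟨?_, ?_, ?_, ?_⟩
  · rw [← Nat.card_congr (Equiv.ofBijective cls cls_bij)]
    simp
  · intro c
    obtain ⟨b, rfl⟩ := cls_bij.2 c
    rcases rep_norm b with ⟨rfl, -⟩ | hb | hb
    · exact Or.inl cls_zero
    · right; left
      have := (cls_min_iff b 2).2 hb
      exact_mod_cast this
    · right; right
      have := (cls_min_iff b 3).2 hb
      exact_mod_cast this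
  · have := count_min 2
    rw [Int.cast_ofNat] at this
    rw [this]; decide +kernel
  · have := count_min 3
    rw [Int.cast_ofNat] at this
    rw [this]; decide +kernel
end
end

section
/- Every integral lattice L with Λ2 ⊆ L ⊆ V is isometric (via a linear isometry of ℝ^3) to one of the two lattices Λ2 and Λ2 + ℤ·(ε1−ε2)/√2. -/
noncomputable section

open scoped RealInnerProductSpace

/-- The laminated lattice `Λ₂ = {√2·x : x ∈ ℤ³, x 0 + x 1 + x 2 = 0} ≅ √2·A₂`. -/
def Λ2 : Submodule ℤ (E 3) :=
  Submodule.span ℤ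
    {v : E 3 | ∃ x : Fin 3 → ℤ, x 0 + x 1 + x 2 = 0 ∧ v = Real.sqrt 2 • intVec x}

/-- `(ε1 - ε2)/√2`. -/
def u12 : E 3 := (Real.sqrt 2)⁻¹ • (εv 0 - εv 1)

section Helpers

/-- The vector `y/√2` for integral `y`. -/
def halfVec (y : Fin 3 → ℤ) : E 3 := (Real.sqrt 2)⁻¹ • intVec y

lemma halfVec_apply (y : Fin 3 → ℤ) (i : Fin 3) : halfVec y i = (Real.sqrt 2)⁻¹ * (y i : ℝ) := by
  simp [halfVec, intVec]

lemma halfVec_add (y z : Fin 3 → ℤ) : halfVec (y + z) = halfVec y + halfVec z := by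
  ext i
  simp only [halfVec_apply, PiLp.add_apply, Pi.add_apply]
  push_cast
  ring

lemma halfVec_smul (n : ℤ) (z : Fin 3 → ℤ) : halfVec (n • z) = n • halfVec z := by
  ext i
  rw [halfVec_apply, PiLp.smul_apply, halfVec_apply]
  simp only [Pi.smul_apply, smul_eq_mul, zsmul_eq_mul]
  push_cast
  ring

lemma sqrt_two_eq : Real.sqrt 2 = (Real.sqrt 2)⁻¹ * 2 := by
  have h : Real.sqrt 2 * Real.sqrt 2 = 2 := Real.mul_self_sqrt (by norm_num)
  have h0 : Real.sqrt 2 ≠ 0 := by positivity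
  field_simp
  linarith

lemma sqrt_two_smul_intVec (y : Fin 3 → ℤ) : Real.sqrt 2 • intVec y = halfVec ((2 : ℤ) • y) := by
  ext i
  rw [halfVec_apply]
  have : (Real.sqrt 2 • intVec y) i = Real.sqrt 2 * (y i : ℝ) := by simp [intVec]
  rw [this]
  simp only [Pi.smul_apply, smul_eq_mul]
  push_cast
  nth_rewrite 1 [sqrt_two_eq]
  ring

lemma mem_Λ2_iff (x : E 3) :
    x ∈ Λ2 ↔ ∃ y : Fin 3 → ℤ, y 0 + y 1 + y 2 = 0 ∧ (∀ i, Even (y i)) ∧ x = halfVec y := by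
  constructor
  · intro h
    unfold Λ2 at h
    induction h using Submodule.span_induction with
    | mem v hv =>
      obtain ⟨y, hy, rfl⟩ := hv
      refine ⟨(2 : ℤ) • y, ?_, ?_, sqrt_two_smul_intVec y⟩
      · simp only [Pi.smul_apply, smul_eq_mul]; linarith
      · intro i; simp
    | zero =>
      refine ⟨0, by simp, by simp, ?_⟩
      ext i
      simp [halfVec_apply]
    | add a b _ _ ha hb =>
      obtain ⟨y, hy, hy', rfl⟩ := ha
      obtain ⟨z, hz, hz', rfl⟩ := hb
      refine ⟨y + z, ?_, fun i => (hy' i).add (hz' i), (halfVec_add y z).symm⟩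
      simp only [Pi.add_apply]; linarith
    | smul n a _ ha =>
      obtain ⟨y, hy, hy', rfl⟩ := ha
      refine ⟨n • y, ?_, fun i => (hy' i).mul_left n, (halfVec_smul n y).symm⟩
      simp only [Pi.smul_apply, smul_eq_mul]
      rw [← mul_add, ← mul_add, hy, mul_zero]
  · rintro ⟨y, hy, hy', rfl⟩
    choose w hw using hy'
    have : y = (2 : ℤ) • w := by
      funext i; simp only [Pi.smul_apply, smul_eq_mul]; rw [hw i]; ring
    subst this
    rw [← sqrt_two_smul_intVec]
    refine Submodule.subset_span ⟨w, ?_, rfl⟩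
    simp only [Pi.smul_apply, smul_eq_mul] at hy
    linarith

lemma inner_halfVec (y z : Fin 3 → ℤ) :
    ⟪halfVec y, halfVec z⟫ = ((y 0 * z 0 + y 1 * z 1 + y 2 * z 2 : ℤ) : ℝ) / 2 := by
  have h : (Real.sqrt 2)⁻¹ * (Real.sqrt 2)⁻¹ = 1 / 2 := by
    rw [← mul_inv, Real.mul_self_sqrt (by norm_num)]; norm_num
  simp only [PiLp.inner_apply, Fin.sum_univ_three, halfVec_apply, RCLike.inner_apply, conj_trivial]
  push_cast
  linear_combination ((y 0 : ℝ) * z 0 + y 1 * z 1 + y 2 * z 2) * h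

lemma u12_eq : u12 = halfVec ![1, -1, 0] := by
  ext i
  rw [halfVec_apply]
  fin_cases i <;> simp [u12, εv]

lemma mem_sup_iff (x : E 3) :
    x ∈ Λ2 ⊔ Submodule.span ℤ {u12} ↔
      ∃ y : Fin 3 → ℤ, y 0 + y 1 + y 2 = 0 ∧ Even (y 2) ∧ x = halfVec y := by
  rw [Submodule.mem_sup]
  constructor
  · rintro ⟨a, ha, b, hb, rfl⟩
    obtain ⟨y, hy, hy', rfl⟩ := (mem_Λ2_iff a).1 ha
    obtain ⟨n, rfl⟩ := Submodule.mem_span_singleton.1 hb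
    refine ⟨y + n • ![1, -1, 0], ?_, ?_, ?_⟩
    · simp; linarith
    · simpa using hy' 2
    · rw [halfVec_add, halfVec_smul, u12_eq]
  · rintro ⟨y, hy, hy', rfl⟩
    refine ⟨halfVec (y - y 0 • ![1, -1, 0]), ?_, y 0 • u12, ?_, ?_⟩
    · refine (mem_Λ2_iff _).2 ⟨_, ?_, ?_, rfl⟩
      · simp; linarith
      · intro i
        fin_cases i
        · simp
        · simp
          have : y 1 + y 0 = - y 2 := by linarith
          rw [this]
          exact hy'.neg
        · simpa using hy'
    · exact Submodule.smul_mem _ _ (Submodule.mem_span_singleton_self _)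
    · rw [u12_eq, ← halfVec_smul, ← halfVec_add, sub_add_cancel]

lemma mem_L (L : Submodule ℤ (E 3))
    (hL : LatticeIsIntegral L) (hΛ : Λ2 ≤ L) (hV : ∀ x ∈ L, x 0 + x 1 + x 2 = 0)
    (x : E 3) (hx : x ∈ L) : ∃ y : Fin 3 → ℤ, y 0 + y 1 + y 2 = 0 ∧ x = halfVec y := by
  have hs : Real.sqrt 2 * Real.sqrt 2 = 2 := Real.mul_self_sqrt (by norm_num)
  have h0 : Real.sqrt 2 ≠ 0 := by positivity
  have h1 : halfVec ![2, -2, 0] ∈ L := hΛ ((mem_Λ2_iff _).2 ⟨_, by simp, by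
    intro i; fin_cases i <;> simp, rfl⟩)
  have h2 : halfVec ![2, 0, -2] ∈ L := hΛ ((mem_Λ2_iff _).2 ⟨_, by simp, by
    intro i; fin_cases i <;> simp, rfl⟩)
  obtain ⟨m, hm⟩ := hL _ hx _ h1
  obtain ⟨n, hn⟩ := hL _ hx _ h2
  obtain ⟨k, hk⟩ := hL _ hx _ hx
  have hv := hV x hx
  simp only [PiLp.inner_apply, Fin.sum_univ_three, halfVec_apply, RCLike.inner_apply,
    conj_trivial] at hm hn hk
  simp at hm hn
  have e2 := sqrt_two_eq
  have hm' : Real.sqrt 2 * (x 0 - x 1) = m := by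
    rw [← hm]; linear_combination (x 0 - x 1) * e2
  have hn' : Real.sqrt 2 * (x 0 - x 2) = n := by
    rw [← hn]; linear_combination (x 0 - x 2) * e2
  have hy0 : 3 * (Real.sqrt 2 * x 0) = m + n := by
    rw [← hm', ← hn']; linear_combination Real.sqrt 2 * hv
  have hkz : m * m - m * n + n * n = 3 * k := by
    have : (m * m - m * n + n * n : ℝ) = 3 * k := by
      rw [← hk, ← hm', ← hn']
      have e : x 0 = - x 1 - x 2 := by linarith
      rw [e]
      linear_combination (3 * x 1 ^ 2 + 3 * x 2 ^ 2 + 3 * x 1 * x 2) * hs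
    exact_mod_cast this
  have hdvd : (3 : ℤ) ∣ m + n := by
    refine Int.prime_three.dvd_of_dvd_pow (n := 2) ⟨k + m * n, ?_⟩
    linear_combination hkz
  obtain ⟨t, ht⟩ := hdvd
  have hx0 : Real.sqrt 2 * x 0 = t := by
    have : (m + n : ℝ) = 3 * t := by exact_mod_cast ht
    linarith
  refine ⟨![t, t - m, t - n], ?_, ?_⟩
  · simp; linarith
  · ext i
    rw [halfVec_apply, eq_inv_mul_iff_mul_eq₀ h0]
    fin_cases i
    · simpa using hx0
    · simp; linarith
    · simp; linarith

lemma isom_of (L : Submodule ℤ (E 3)) (k : Fin 3)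
    (h : ∀ x, x ∈ L ↔ ∃ y : Fin 3 → ℤ, y 0 + y 1 + y 2 = 0 ∧ Even (y k) ∧ x = halfVec y) :
    IsometricLattices L (Λ2 ⊔ Submodule.span ℤ {u12}) := by
  have hsum : ∀ y : Fin 3 → ℤ, y 0 + y 1 + y 2 = 0 →
      y (Equiv.swap k 2 0) + y (Equiv.swap k 2 1) + y (Equiv.swap k 2 2) = 0 := by
    intro y hy
    have := Equiv.sum_comp (Equiv.swap k 2) y
    simp only [Fin.sum_univ_three] at this
    rw [this, hy]
  have hg : ∀ y : Fin 3 → ℤ,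
      LinearIsometryEquiv.piLpCongrLeft 2 ℝ ℝ (Equiv.swap k 2) (halfVec y)
        = halfVec (fun i => y (Equiv.swap k 2 i)) := by
    intro y
    ext i
    rw [halfVec_apply, LinearIsometryEquiv.piLpCongrLeft_apply]
    simp [Equiv.piCongrLeft'_apply, halfVec_apply]
  refine ⟨LinearIsometryEquiv.piLpCongrLeft 2 ℝ ℝ (Equiv.swap k 2), ?_⟩
  ext x
  rw [SetLike.mem_coe, mem_sup_iff]
  constructor
  · rintro ⟨a, ha, rfl⟩
    obtain ⟨y, hy, hy', rfl⟩ := (h a).1 ha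
    exact ⟨_, hsum y hy, by simpa using hy', hg y⟩
  · rintro ⟨y, hy, hy', rfl⟩
    refine ⟨halfVec (fun i => y (Equiv.swap k 2 i)),
      (h _).2 ⟨_, hsum y hy, by simpa using hy', rfl⟩, ?_⟩
    rw [hg]
    simp

lemma mem_iff_of (L : Submodule ℤ (E 3))
    (hL : LatticeIsIntegral L) (hΛ : Λ2 ≤ L) (hV : ∀ x ∈ L, x 0 + x 1 + x 2 = 0)
    (y : Fin 3 → ℤ) (hy : y 0 + y 1 + y 2 = 0) (hyL : halfVec y ∈ L) (k : Fin 3)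
    (hk : ∀ i, Even (y i) ↔ i = k) (x : E 3) :
    x ∈ L ↔ ∃ z : Fin 3 → ℤ, z 0 + z 1 + z 2 = 0 ∧ Even (z k) ∧ x = halfVec z := by
  have k0 := hk 0
  have k1 := hk 1
  have k2 := hk 2
  constructor
  · intro hx
    obtain ⟨z, hz, rfl⟩ := mem_L L hL hΛ hV x hx
    refine ⟨z, hz, ?_, rfl⟩
    obtain ⟨m, hm⟩ := hL _ hyL _ hx
    rw [inner_halfVec] at hm
    have hm' : y 0 * z 0 + y 1 * z 1 + y 2 * z 2 = 2 * m := by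
      have : ((y 0 * z 0 + y 1 * z 1 + y 2 * z 2 : ℤ) : ℝ) = 2 * m := by linarith
      exact_mod_cast this
    have he : Even (y 0 * z 0 + y 1 * z 1 + y 2 * z 2) := by rw [hm']; simp
    have hz' : Even (z 0 + z 1 + z 2) := by rw [hz]; simp
    clear hk hm hx hyL hV hΛ hL
    fin_cases k <;> simp [Int.even_add, Int.even_mul] at * <;>
      simp only [← Int.not_even_iff_odd] at * <;> tauto
  · rintro ⟨z, hz, hzk, rfl⟩
    by_cases hall : ∀ i, Even (z i)
    · exact hΛ ((mem_Λ2_iff _).2 ⟨z, hz, hall, rfl⟩)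
    · have hd : halfVec (z - y) ∈ L := by
        refine hΛ ((mem_Λ2_iff _).2 ⟨z - y, ?_, ?_, rfl⟩)
        · simp only [Pi.sub_apply]; linarith
        · have hz' : Even (z 0 + z 1 + z 2) := by rw [hz]; simp
          simp only [Fin.forall_fin_succ, Pi.sub_apply, Int.even_sub, Int.even_add] at *
          fin_cases k <;> simp at * <;> simp only [← Int.not_even_iff_odd] at * <;> tauto
      have := L.add_mem hd hyL
      rwa [← halfVec_add, sub_add_cancel] at this

end Helpers

/-- Every integral lattice `L` with `Λ₂ ⊆ L ⊆ V = {x : x 0 + x 1 + x 2 = 0}` is isometric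
to `Λ₂` or to `Λ₂ + ℤ·(ε1-ε2)/√2`. -/
theorem integral_lattices_containing_Λ2 (L : Submodule ℤ (E 3))
    (hL : LatticeIsIntegral L) (hΛ : Λ2 ≤ L) (hV : ∀ x ∈ L, x 0 + x 1 + x 2 = 0) :
    IsometricLattices L Λ2 ∨ IsometricLattices L (Λ2 ⊔ Submodule.span ℤ {u12}) := by
  by_cases h : L ≤ Λ2
  · left
    have : L = Λ2 := le_antisymm h hΛ
    subst this
    exact ⟨LinearIsometryEquiv.refl ℝ _, by simp⟩
  · right
    obtain ⟨x, hx, hx'⟩ := SetLike.not_le_iff_exists.1 h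
    obtain ⟨y, hy, rfl⟩ := mem_L L hL hΛ hV x hx
    have hodd : ¬ ∀ i, Even (y i) := fun hall => hx' ((mem_Λ2_iff _).2 ⟨y, hy, hall, rfl⟩)
    have hk : ∃ k, ∀ i, Even (y i) ↔ i = k := by
      have hy' : Even (y 0 + y 1 + y 2) := by rw [hy]; simp
      clear hx hx'
      by_cases h0 : Even (y 0)
      · refine ⟨0, ?_⟩
        simp [Fin.forall_fin_succ, Int.even_add] at *
        simp only [← Int.not_even_iff_odd] at *
        tauto
      · by_cases h1 : Even (y 1)
        · refine ⟨1, ?_⟩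
          simp [Fin.forall_fin_succ, Int.even_add] at *
          simp only [← Int.not_even_iff_odd] at *
          tauto
        · refine ⟨2, ?_⟩
          simp [Fin.forall_fin_succ, Int.even_add] at *
          simp only [← Int.not_even_iff_odd] at *
          tauto
    obtain ⟨k, hk⟩ := hk
    exact isom_of L k (mem_iff_of L hL hΛ hV y hy hx k hk)
end
end

section
/- The quotient group Λ2♯/Λ2 has exactly 12 elements, consisting of: the zero coset; exactly 6 cosets of minimal norm 1/3, each of order 6 in the group; exactly 3 cosets of minimal norm 1, each of order 2; and exactly 2 cosets of minimal norm 4/3, each of order 3. Here the minimal norm of a coset is the minimum of ‖x‖² over x in the coset. -/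
noncomputable section

open scoped RealInnerProductSpace

/-- The dual lattice of `Λ` inside the hyperplane `V = {x : ∑ i, x i = 0}`:
`Λ♯ = {x ∈ V : ⟪x,y⟫ ∈ ℤ for all y ∈ Λ}`. -/
def dualLatticeIn {n : ℕ} (Λ : Submodule ℤ (E n)) : Submodule ℤ (E n) where
  carrier := {x | (∑ i, x i = 0) ∧ ∀ y ∈ Λ, ∃ k : ℤ, ⟪x, y⟫ = (k : ℝ)}
  zero_mem' := ⟨by simp, fun y _ => ⟨0, by simp⟩⟩
  add_mem' := by
    rintro a b ⟨ha0, ha⟩ ⟨hb0, hb⟩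
    refine ⟨?_, ?_⟩
    · simp only [PiLp.add_apply, Finset.sum_add_distrib, ha0, hb0, add_zero]
    · intro y hy
      obtain ⟨k, hk⟩ := ha y hy
      obtain ⟨l, hl⟩ := hb y hy
      exact ⟨k + l, by rw [inner_add_left, hk, hl]; push_cast; ring⟩
  smul_mem' := by
    rintro c x ⟨hx0, hx⟩
    refine ⟨?_, ?_⟩
    · simp only [PiLp.smul_apply, smul_eq_mul, zsmul_eq_mul, ← Finset.mul_sum, hx0, mul_zero]
    · intro y hy
      obtain ⟨k, hk⟩ := hx y hy
      refine ⟨c * k, ?_⟩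
      rw [← Int.cast_smul_eq_zsmul ℝ c x, real_inner_smul_left, hk]
      push_cast
      ring

/-- The quotient abelian group `Λ♯/Λ`. -/
abbrev DualQuotIn {n : ℕ} (Λ : Submodule ℤ (E n)) :=
  (dualLatticeIn Λ) ⧸ (Λ.comap (dualLatticeIn Λ).subtype)

/-- The coset `c ∈ Λ♯/Λ` has minimal norm `m`, i.e. `m` is the minimum of `‖x‖²`
over `x` in the coset `c`. -/
def CosetMinNormIn {n : ℕ} (Λ : Submodule ℤ (E n)) (c : DualQuotIn Λ) (m : ℝ) : Prop :=
  IsLeast {r : ℝ | ∃ x : dualLatticeIn Λ, Submodule.Quotient.mk x = c ∧ r = ‖(x : E n)‖ ^ 2} m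

lemma mem_Λ2 (v : E 3) : v ∈ Λ2 ↔
    ∃ x : Fin 3 → ℤ, x 0 + x 1 + x 2 = 0 ∧ v = Real.sqrt 2 • intVec x := by
  constructor
  · intro h
    unfold Λ2 at h
    induction h using Submodule.span_induction with
    | mem x hx => exact hx
    | zero => exact ⟨0, by simp, by ext i; simp [intVec]⟩
    | add x y _ _ hx hy =>
      obtain ⟨a, ha, rfl⟩ := hx
      obtain ⟨b, hb, rfl⟩ := hy
      refine ⟨a + b, by simp only [Pi.add_apply]; omega, ?_⟩
      ext i; simp [intVec]; ring
    | smul c x _ hx =>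
      obtain ⟨a, ha, rfl⟩ := hx
      refine ⟨c • a, ?_, ?_⟩
      · simp only [Pi.smul_apply, smul_eq_mul, ← mul_add, ha, mul_zero]
      · ext i; simp [intVec]; ring
  · exact fun h => Submodule.subset_span h

/-- The dual vector with coordinates `a`, `b`. -/
def dv (a b : ℤ) : E 3 :=
  !₂[(2 * a + b) * Real.sqrt 2 / 6, (b - a) * Real.sqrt 2 / 6, -(a + 2 * b) * Real.sqrt 2 / 6]

lemma s2 : Real.sqrt 2 * Real.sqrt 2 = 2 := Real.mul_self_sqrt (by norm_num)

lemma dv_norm (a b : ℤ) : ‖dv a b‖ ^ 2 = ((a ^ 2 + a * b + b ^ 2 : ℤ) : ℝ) / 3 := by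
  rw [EuclideanSpace.real_norm_sq_eq, Fin.sum_univ_three]
  simp [dv]
  linear_combination (a ^ 2 + a * b + b ^ 2 : ℝ) / 6 * s2

lemma dv_mem (a b : ℤ) : dv a b ∈ dualLatticeIn Λ2 := by
  refine ⟨?_, ?_⟩
  · rw [Fin.sum_univ_three]; simp [dv]; ring
  · intro y hy
    obtain ⟨x, hx, rfl⟩ := (mem_Λ2 y).1 hy
    refine ⟨(a + b) * x 0 + b * x 1, ?_⟩
    have h2 : (x 2 : ℝ) = - x 0 - x 1 := by
      have : x 2 = - x 0 - x 1 := by omega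
      rw [this]; push_cast; ring
    simp [dv, intVec, PiLp.inner_apply, Fin.sum_univ_three, h2]
    linear_combination ((a + b) * x 0 + b * x 1 : ℝ) / 2 * s2

lemma dv_surj (v : E 3) (hv : v ∈ dualLatticeIn Λ2) : ∃ a b : ℤ, dv a b = v := by
  obtain ⟨h0, h⟩ := hv
  obtain ⟨a, ha⟩ := h (Real.sqrt 2 • intVec ![1, -1, 0]) ((mem_Λ2 _).2 ⟨_, by simp, rfl⟩)
  obtain ⟨b, hb⟩ := h (Real.sqrt 2 • intVec ![0, 1, -1]) ((mem_Λ2 _).2 ⟨_, by simp, rfl⟩)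
  refine ⟨a, b, ?_⟩
  rw [Fin.sum_univ_three] at h0
  simp [intVec, PiLp.inner_apply, Fin.sum_univ_three] at ha hb
  ext i
  fin_cases i
  · simp [dv, ← ha, ← hb]
    linear_combination (2 * v 0 - v 1 - v 2) / 6 * s2 - h0 / 3
  · simp [dv, ← ha, ← hb]
    linear_combination (2 * v 1 - v 0 - v 2) / 6 * s2 - h0 / 3
  · simp [dv, ← ha, ← hb]
    linear_combination (2 * v 2 - v 0 - v 1) / 6 * s2 - h0 / 3

lemma dv_mem_Λ2 (a b : ℤ) : dv a b ∈ Λ2 ↔ (2 ∣ a ∧ 6 ∣ b - a) := by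
  have hs : Real.sqrt 2 ≠ 0 := by positivity
  rw [mem_Λ2]
  constructor
  · rintro ⟨x, hx, h⟩
    have h0 := congrArg (fun v : E 3 => v 0) h
    have h1 := congrArg (fun v : E 3 => v 1) h
    simp [dv, intVec] at h0 h1
    have e0 : 2 * a + b = 6 * x 0 := by
      have : (2 * a + b : ℝ) = 6 * x 0 := by
        apply mul_left_cancel₀ hs; linear_combination 6 * h0
      exact_mod_cast this
    have e1 : b - a = 6 * x 1 := by
      have : (b - a : ℝ) = 6 * x 1 := by
        apply mul_left_cancel₀ hs; linear_combination 6 * h1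
      exact_mod_cast this
    omega
  · rintro ⟨⟨p, rfl⟩, ⟨q, hq⟩⟩
    obtain rfl : b = 2 * p + 6 * q := by omega
    refine ⟨![p + q, q, -p - 2 * q], by simp; ring, ?_⟩
    ext i
    fin_cases i <;> simp [dv, intVec] <;> ring

/-- The parametrisation of the quotient. -/
def hq : ℤ × ℤ →+ DualQuotIn Λ2 where
  toFun z := Submodule.Quotient.mk ⟨dv z.1 z.2, dv_mem z.1 z.2⟩
  map_zero' := by
    rw [Submodule.Quotient.mk_eq_zero]
    exact (dv_mem_Λ2 0 0).2 (by simp)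
  map_add' x y := by
    rw [← Submodule.Quotient.mk_add]
    congr 1
    ext i
    fin_cases i <;> simp [dv] <;> ring

/-- The model map. -/
def kq : ℤ × ℤ →+ ZMod 2 × ZMod 6 where
  toFun z := ((z.1 : ZMod 2), ((z.2 - z.1 : ℤ) : ZMod 6))
  map_zero' := by simp
  map_add' x y := by
    ext
    · simp
    · simp; ring

lemma hq_surj : Function.Surjective hq := by
  intro c
  obtain ⟨⟨v, hv⟩, rfl⟩ := Submodule.Quotient.mk_surjective _ c
  obtain ⟨a, b, rfl⟩ := dv_surj v hv
  exact ⟨(a, b), rfl⟩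

lemma kq_surj : Function.Surjective kq := by
  rintro ⟨p, q⟩
  obtain ⟨a, rfl⟩ := ZMod.intCast_surjective p
  obtain ⟨b, rfl⟩ := ZMod.intCast_surjective q
  exact ⟨(a, a + b), by simp [kq]⟩

lemma ker_eq : hq.ker = kq.ker := by
  ext ⟨a, b⟩
  rw [AddMonoidHom.mem_ker, AddMonoidHom.mem_ker]
  have h1 : hq (a, b) = 0 ↔ (2 ∣ a ∧ 6 ∣ b - a) := by
    rw [← dv_mem_Λ2]
    exact Submodule.Quotient.mk_eq_zero _
  have h2 : kq (a, b) = 0 ↔ (2 ∣ a ∧ 6 ∣ b - a) := by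
    have e1 := ZMod.intCast_zmod_eq_zero_iff_dvd a 2
    have e2 := ZMod.intCast_zmod_eq_zero_iff_dvd (b - a) 6
    rw [Prod.ext_iff]
    exact and_congr e1 e2
  rw [h1, h2]

/-- The quotient is `ℤ/2 × ℤ/6`. -/
def eq26 : DualQuotIn Λ2 ≃+ ZMod 2 × ZMod 6 :=
  (QuotientAddGroup.quotientKerEquivOfSurjective hq hq_surj).symm.trans
    ((QuotientAddGroup.quotientAddEquivOfEq ker_eq).trans
      (QuotientAddGroup.quotientKerEquivOfSurjective kq kq_surj))

lemma eq26_hq (z : ℤ × ℤ) : eq26 (hq z) = kq z := by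
  have : (QuotientAddGroup.quotientKerEquivOfSurjective hq hq_surj).symm (hq z)
      = (QuotientAddGroup.mk z) := by
    rw [AddEquiv.symm_apply_eq]; rfl
  simp only [eq26, AddEquiv.trans_apply, this]
  rfl

lemma minNorm_of (c : DualQuotIn Λ2) (n : ℤ)
    (hex : ∃ a b : ℤ, kq (a, b) = eq26 c ∧ a ^ 2 + a * b + b ^ 2 = n)
    (hle : ∀ a b : ℤ, kq (a, b) = eq26 c → n ≤ a ^ 2 + a * b + b ^ 2) :
    CosetMinNormIn Λ2 c ((n : ℝ) / 3) := by
  constructor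
  · obtain ⟨a, b, h, rfl⟩ := hex
    refine ⟨⟨dv a b, dv_mem a b⟩, ?_, (dv_norm a b).symm⟩
    rw [← eq26_hq] at h
    exact eq26.injective h
  · rintro r ⟨⟨v, hv⟩, hc, rfl⟩
    obtain ⟨a, b, rfl⟩ := dv_surj v hv
    have : n ≤ a ^ 2 + a * b + b ^ 2 := by
      apply hle
      rw [← eq26_hq, ← hc]; rfl
    simp only [dv_norm]
    have h' : (n : ℝ) ≤ ((a ^ 2 + a * b + b ^ 2 : ℤ) : ℝ) := by exact_mod_cast this
    linarith

lemma form_pos (a b : ℤ) (h : kq (a, b) ≠ 0) : 1 ≤ a ^ 2 + a * b + b ^ 2 := by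
  by_contra! hlt
  have ha : a = 0 := by
    have : a ^ 2 = 0 := le_antisymm (by nlinarith [sq_nonneg (a + 2 * b)]) (sq_nonneg a)
    exact pow_eq_zero_iff two_ne_zero |>.1 this
  have hb : b = 0 := by
    have : b ^ 2 = 0 := le_antisymm (by nlinarith [sq_nonneg (2 * a + b)]) (sq_nonneg b)
    exact pow_eq_zero_iff two_ne_zero |>.1 this
  subst ha hb
  exact h (map_zero kq)

lemma order_cases (c : ZMod 2 × ZMod 6) : c = 0 ∨
    ((6 • c = 0 ∧ 2 • c ≠ 0 ∧ 3 • c ≠ 0) ∨ (c ≠ 0 ∧ 2 • c = 0) ∨ (c ≠ 0 ∧ 3 • c = 0)) := by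
  revert c; decide

lemma order6 (c : ZMod 2 × ZMod 6) : addOrderOf c = 6 ↔ (2 • c ≠ 0 ∧ 3 • c ≠ 0) := by
  constructor
  · intro h
    constructor <;> intro h' <;> have := addOrderOf_dvd_of_nsmul_eq_zero h' <;>
      rw [h] at this <;> revert this <;> decide
  · rintro ⟨h2, h3⟩
    have h6 : addOrderOf c ∣ 6 := addOrderOf_dvd_of_nsmul_eq_zero (by revert c; decide)
    have n2 : ¬ addOrderOf c ∣ 2 := fun h => h2 (addOrderOf_dvd_iff_nsmul_eq_zero.1 h)
    have n3 : ¬ addOrderOf c ∣ 3 := fun h => h3 (addOrderOf_dvd_iff_nsmul_eq_zero.1 h)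
    have := Nat.le_of_dvd (by norm_num) h6
    interval_cases addOrderOf c <;> omega

lemma order_p (p : ℕ) (hp : p.Prime) (c : ZMod 2 × ZMod 6) :
    addOrderOf c = p ↔ (c ≠ 0 ∧ p • c = 0) := by
  haveI := Fact.mk hp
  constructor
  · intro h
    refine ⟨?_, h ▸ addOrderOf_nsmul_eq_zero c⟩
    rintro rfl
    rw [addOrderOf_zero] at h
    exact hp.one_lt.ne h
  · rintro ⟨h1, h2⟩
    exact addOrderOf_eq_prime h2 h1

lemma order_eq (c : DualQuotIn Λ2) : addOrderOf c = addOrderOf (eq26 c) :=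
  (addOrderOf_injective eq26.toAddMonoidHom eq26.injective c).symm

lemma min6 (c : DualQuotIn Λ2) (h : addOrderOf c = 6) : CosetMinNormIn Λ2 c (1 / 3) := by
  rw [order_eq, order6] at h
  have key := minNorm_of c 1 ?_ ?_
  · simpa using key
  · have : ∀ x : ZMod 2 × ZMod 6, (2 • x ≠ 0 ∧ 3 • x ≠ 0) →
        x = kq (1, 0) ∨ x = kq (-1, 0) ∨ x = kq (0, 1) ∨ x = kq (0, -1) ∨
        x = kq (1, -1) ∨ x = kq (-1, 1) := by
      simp only [kq, AddMonoidHom.coe_mk, ZeroHom.coe_mk]; decide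
    rcases this _ h with h | h | h | h | h | h <;> rw [h] <;> exact ⟨_, _, rfl, by norm_num⟩
  · intro a b hab
    apply form_pos
    rw [hab]
    intro h0
    exact h.1 (by rw [h0]; rfl)

lemma min2 (c : DualQuotIn Λ2) (h : addOrderOf c = 2) : CosetMinNormIn Λ2 c 1 := by
  rw [order_eq, order_p 2 Nat.prime_two] at h
  have key := minNorm_of c 3 ?_ ?_
  · norm_num at key; exact key
  · have : ∀ x : ZMod 2 × ZMod 6, (x ≠ 0 ∧ 2 • x = 0) →
        x = kq (1, 1) ∨ x = kq (2, -1) ∨ x = kq (1, -2) := by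
      simp only [kq, AddMonoidHom.coe_mk, ZeroHom.coe_mk]; decide
    rcases this _ h with h | h | h <;> rw [h] <;> exact ⟨_, _, rfl, by norm_num⟩
  · intro a b hab
    have hp := form_pos a b (by rw [hab]; exact h.1)
    have h3 := h.2
    rw [← hab] at h3
    have h4 : ((2 * (b - a) : ℤ) : ZMod 6) = 0 := by
      have := congrArg Prod.snd h3
      simpa [kq] using this
    have h5 := (ZMod.intCast_zmod_eq_zero_iff_dvd _ 6).1 h4
    obtain ⟨t, ht⟩ : ∃ t, b = a + 3 * t := ⟨(b - a) / 3, by push_cast at h5; omega⟩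
    subst ht
    have : a ^ 2 + a * (a + 3 * t) + (a + 3 * t) ^ 2 = 3 * (a ^ 2 + 3 * a * t + 3 * t ^ 2) := by
      ring
    omega

lemma min3 (c : DualQuotIn Λ2) (h : addOrderOf c = 3) : CosetMinNormIn Λ2 c (4 / 3) := by
  rw [order_eq, order_p 3 Nat.prime_three] at h
  have key := minNorm_of c 4 ?_ ?_
  · rw [Int.cast_ofNat] at key; exact key
  · have : ∀ x : ZMod 2 × ZMod 6, (x ≠ 0 ∧ 3 • x = 0) →
        x = kq (2, 0) ∨ x = kq (-2, 0) := by
      simp only [kq, AddMonoidHom.coe_mk, ZeroHom.coe_mk]; decide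
    rcases this _ h with h | h <;> rw [h] <;> exact ⟨_, _, rfl, by norm_num⟩
  · intro a b hab
    have hp := form_pos a b (by rw [hab]; exact h.1)
    have h3 := h.2
    rw [← hab] at h3
    have h4 : ((3 * a : ℤ) : ZMod 2) = 0 := by
      have := congrArg Prod.fst h3
      simpa [kq] using this
    have h4' : ((3 * (b - a) : ℤ) : ZMod 6) = 0 := by
      have := congrArg Prod.snd h3
      simpa [kq] using this
    have h5 := (ZMod.intCast_zmod_eq_zero_iff_dvd _ 2).1 h4
    have h5' := (ZMod.intCast_zmod_eq_zero_iff_dvd _ 6).1 h4'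
    obtain ⟨s, rfl⟩ : ∃ s, a = 2 * s := ⟨a / 2, by push_cast at h5; omega⟩
    obtain ⟨t, rfl⟩ : ∃ t, b = 2 * t := ⟨b / 2, by push_cast at h5'; omega⟩
    have : (2 * s) ^ 2 + 2 * s * (2 * t) + (2 * t) ^ 2 = 4 * (s ^ 2 + s * t + t ^ 2) := by
      ring
    omega

lemma ncard_of (P : DualQuotIn Λ2 → Prop) (Q : ZMod 2 × ZMod 6 → Prop) [DecidablePred Q]
    (h : ∀ c, P c ↔ Q (eq26 c)) : {c | P c}.ncard = (Finset.univ.filter Q).card := by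
  have : {c | P c} = eq26.symm '' (Finset.univ.filter Q : Finset (ZMod 2 × ZMod 6)) := by
    ext c
    simp only [Set.mem_setOf_eq, h, Set.mem_image, Finset.coe_filter, Finset.mem_univ, true_and]
    constructor
    · intro hc; exact ⟨_, hc, by simp⟩
    · rintro ⟨x, hx, rfl⟩; simpa using hx
  rw [this, Set.ncard_image_of_injective _ eq26.symm.injective, Set.ncard_coe_finset]

/-- The quotient `Λ₂♯/Λ₂` has exactly 12 elements: the zero coset, 6 cosets of
minimal norm 1/3 and order 6, 3 cosets of minimal norm 1 and order 2, and
2 cosets of minimal norm 4/3 and order 3. -/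
theorem Λ2_dual_quotient_classes :
    Nat.card (DualQuotIn Λ2) = 12 ∧
    (∀ c : DualQuotIn Λ2, c = 0 ∨
      (CosetMinNormIn Λ2 c (1/3) ∧ addOrderOf c = 6) ∨
      (CosetMinNormIn Λ2 c 1 ∧ addOrderOf c = 2) ∨
      (CosetMinNormIn Λ2 c (4/3) ∧ addOrderOf c = 3)) ∧
    {c : DualQuotIn Λ2 | CosetMinNormIn Λ2 c (1/3) ∧ addOrderOf c = 6}.ncard = 6 ∧
    {c : DualQuotIn Λ2 | CosetMinNormIn Λ2 c 1 ∧ addOrderOf c = 2}.ncard = 3 ∧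
    {c : DualQuotIn Λ2 | CosetMinNormIn Λ2 c (4/3) ∧ addOrderOf c = 3}.ncard = 2 := by
  refine ⟨?_, ?_, ?_, ?_, ?_⟩
  · rw [Nat.card_congr eq26.toEquiv]; simp
  · intro c
    rcases order_cases (eq26 c) with h | ⟨_, h⟩ | h | h
    · left; simpa using h
    · right; left
      have := (order_eq c).trans ((order6 _).2 h)
      exact ⟨min6 c this, this⟩
    · right; right; left
      have := (order_eq c).trans ((order_p 2 Nat.prime_two _).2 h)
      exact ⟨min2 c this, this⟩
    · right; right; right
      have := (order_eq c).trans ((order_p 3 Nat.prime_three _).2 h)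
      exact ⟨min3 c this, this⟩
  · rw [ncard_of _ (fun x => 2 • x ≠ 0 ∧ 3 • x ≠ 0)]
    · decide
    · intro c
      rw [and_iff_right_of_imp (min6 c), order_eq, order6]
  · rw [ncard_of _ (fun x => x ≠ 0 ∧ 2 • x = 0)]
    · decide
    · intro c
      rw [and_iff_right_of_imp (min2 c), order_eq, order_p 2 Nat.prime_two]
  · rw [ncard_of _ (fun x => x ≠ 0 ∧ 3 • x = 0)]
    · decide
    · intro c
      rw [and_iff_right_of_imp (min3 c), order_eq, order_p 3 Nat.prime_three]
end
end
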